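/- Let Z ∼ N(0, Σ) and Z' ∼ N(0, Σ') be centered Gaussian vectors in ℝ^d (d ≥ 3), where Σ has unit diagonal entries and smallest eigenvalue σ_*² > 0. Set D := ‖Σ − Σ'‖_∞ (entrywise max norm). Then sup over all rectangles A = ∏_j (a_j, b_j] of |P(Z ∈ A) − P(Z' ∈ A)| is at most C (D/σ_*²) (log d) (1 ∨ |log(D/σ_*²)|) for a universal constant C. -/

import Mathlib

open MeasureTheory ProbabilityTheory

/-
Write `E = Σ' - Σ`. Along the segment from `Σ` to `Σ'`, the Gaussian probability of a rectangle has
derivative `½ ∑ j k, E j k * F j k`, where `F j k` is the same probability with the indicator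
replaced by its second derivative in the directions `j` and `k`. A Gaussian law with covariance at
least `v • 1` is a mixture of product laws `N(y, v • 1)`, for which `F j k` is a product of
one-dimensional kernels: `K 0 l`, the mass of the `l`-th side, for `l ≠ j, k`, and derivatives
`K 1 l`, `K 2 l` otherwise. Mills' ratio gives, with `u ^ 2 = log d` and `X l = 1 - K 0 l + 1 / d`,
the bounds `|K 1 l| ≲ u X l / √v` and `|K 2 l| ≲ u ^ 2 X l / v`. Expanding products,
`∑ j k, X j * X k * ∏ l ≠ j, k, K 0 l` is controlled by `∏ l, (K 0 l + X l) = (1 + 1 / d) ^ d ≤ 3`,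
so `∑ j k, |F j k| ≲ log d / v`.

Adding `δ • Σ` to both covariances keeps the smallest eigenvalue above `(1 - t + δ) σ ^ 2`, whose
inverse integrates to `σ⁻² log ((1 + δ) / δ)`. The added noise exceeds `ε` with small probability by
a Gaussian tail bound, and Nazarov's anti-concentration inequality for `Σ` removes it at the cost
`u ε`. With `r = D / σ ^ 2`, take `δ = r ^ 6` and `ε = r ^ 2` if `r log d ≤ 1 / 16`; otherwise the
claimed bound exceeds `1`.
-/

namespace GaussianRectangle

section Mills

lemma gaussianPDFReal_zero_one (x : ℝ) :
    gaussianPDFReal 0 1 x = (√(2 * Real.pi))⁻¹ * Real.exp (-x ^ 2 / 2) := by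
  simp [gaussianPDFReal]

lemma gaussianPDFReal_zero_one_neg (x : ℝ) :
    gaussianPDFReal 0 1 (-x) = gaussianPDFReal 0 1 x := by
  simp only [gaussianPDFReal_zero_one, neg_sq]

lemma gaussianPDFReal_zero_one_le_exp (x : ℝ) :
    gaussianPDFReal 0 1 x ≤ Real.exp (-x ^ 2 / 2) := by
  rw [gaussianPDFReal_zero_one]
  refine mul_le_of_le_one_left (Real.exp_pos _).le (inv_le_one_of_one_le₀ ?_)
  rw [Real.one_le_sqrt]
  linarith [Real.pi_gt_three]

lemma exp_neg_mul_gaussianPDFReal_le {x y : ℝ} (h : |y - x| ≤ 1 / (1 + |x|)) :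
    Real.exp (-(3 / 2)) * gaussianPDFReal 0 1 x ≤ gaussianPDFReal 0 1 y := by
  rw [gaussianPDFReal_zero_one, gaussianPDFReal_zero_one, mul_left_comm, ← Real.exp_add]
  gcongr
  have hx : 0 < 1 + |x| := by positivity
  have hmul : |y - x| * (1 + |x|) ≤ 1 := by rwa [le_div_iff₀ hx] at h
  have hone : |y - x| ≤ 1 := by nlinarith [abs_nonneg (y - x), abs_nonneg x]
  have hexpand : y ^ 2 = x ^ 2 + 2 * (x * (y - x)) + |y - x| ^ 2 := by rw [sq_abs]; ring
  have hcross : x * (y - x) ≤ |x| * |y - x| := by rw [← abs_mul]; exact le_abs_self _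
  nlinarith [hone, abs_nonneg (y - x), abs_nonneg x]

lemma measureReal_gaussianReal (μ : ℝ) {v : NNReal} (hv : v ≠ 0) (s : Set ℝ) :
    (gaussianReal μ v).real s = ∫ x in s, gaussianPDFReal μ v x := by
  rw [Measure.real, gaussianReal_apply_eq_integral μ hv, ENNReal.toReal_ofReal]
  exact integral_nonneg fun x => gaussianPDFReal_nonneg _ _ _

lemma exp_three_halves_le_five : Real.exp (3 / 2) ≤ 5 := by
  have hsq : Real.exp (3 / 2) ^ 2 = Real.exp 1 ^ 3 := by
    rw [← Real.exp_nat_mul, ← Real.exp_nat_mul]; norm_num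
  have hcube : Real.exp 1 ^ 3 ≤ 2.72 ^ 3 := by
    gcongr; linarith [Real.exp_one_lt_d9]
  nlinarith [Real.exp_pos (3 / 2)]

lemma gaussianPDFReal_le_mul_measureReal_Ioi (x : ℝ) :
    gaussianPDFReal 0 1 x ≤ 5 * (1 + |x|) * (gaussianReal 0 1).real (Set.Ioi x) := by
  set φ := gaussianPDFReal 0 1
  set h := 1 / (1 + |x|) with hh
  have hh0 : 0 < h := by positivity
  have htail : h * (Real.exp (-(3 / 2)) * φ x) ≤ (gaussianReal 0 1).real (Set.Ioi x) :=
    calc h * (Real.exp (-(3 / 2)) * φ x)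
        = ∫ _ in Set.Ioc x (x + h), (Real.exp (-(3 / 2)) * φ x) := by
          rw [setIntegral_const, smul_eq_mul, Measure.real, Real.volume_Ioc,
            add_sub_cancel_left, ENNReal.toReal_ofReal hh0.le]
      _ ≤ ∫ y in Set.Ioc x (x + h), φ y := by
          refine setIntegral_mono_on (integrableOn_const (by simp))
            (integrable_gaussianPDFReal 0 1).integrableOn measurableSet_Ioc fun y hy => ?_
          refine exp_neg_mul_gaussianPDFReal_le ?_
          rw [abs_of_nonneg (sub_nonneg.2 hy.1.le)]
          linarith [hy.2]
      _ = (gaussianReal 0 1).real (Set.Ioc x (x + h)) :=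
          (measureReal_gaussianReal 0 one_ne_zero _).symm
      _ ≤ (gaussianReal 0 1).real (Set.Ioi x) := measureReal_mono Set.Ioc_subset_Ioi_self
  calc φ x = Real.exp (3 / 2) * (1 + |x|) * (h * (Real.exp (-(3 / 2)) * φ x)) := by
        rw [hh, Real.exp_neg]
        field_simp
    _ ≤ 5 * (1 + |x|) * (gaussianReal 0 1).real (Set.Ioi x) := by
        gcongr
        · exact mul_nonneg hh0.le (mul_nonneg (Real.exp_pos _).le (gaussianPDFReal_nonneg _ _ _))
        · exact exp_three_halves_le_five

lemma gaussianPDFReal_le_measureReal_Ioi_add_exp {u : ℝ} (hu : 1 ≤ u) (x : ℝ) :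
    gaussianPDFReal 0 1 x
      ≤ 15 * u * ((gaussianReal 0 1).real (Set.Ioi x) + Real.exp (-u ^ 2)) := by
  set m := (gaussianReal 0 1).real (Set.Ioi x)
  have hm : 0 ≤ m := measureReal_nonneg
  have hexp := Real.exp_pos (-u ^ 2)
  rcases le_or_gt |x| (2 * u) with hx | hx
  · calc gaussianPDFReal 0 1 x ≤ 5 * (1 + |x|) * m := gaussianPDFReal_le_mul_measureReal_Ioi x
      _ ≤ 5 * (3 * u) * (m + Real.exp (-u ^ 2)) := by gcongr <;> linarith
      _ = 15 * u * (m + Real.exp (-u ^ 2)) := by ring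
  · calc gaussianPDFReal 0 1 x ≤ Real.exp (-x ^ 2 / 2) := gaussianPDFReal_zero_one_le_exp x
      _ ≤ Real.exp (-u ^ 2) := by gcongr; nlinarith [sq_abs x]
      _ ≤ 15 * u * (m + Real.exp (-u ^ 2)) := by nlinarith

lemma abs_mul_gaussianPDFReal_le_measureReal_Ioi_add_exp {u : ℝ} (hu : 1 ≤ u) (x : ℝ) :
    |x| * gaussianPDFReal 0 1 x
      ≤ 30 * u ^ 2 * ((gaussianReal 0 1).real (Set.Ioi x) + Real.exp (-u ^ 2)) := by
  set m := (gaussianReal 0 1).real (Set.Ioi x)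
  have hm : 0 ≤ m := measureReal_nonneg
  rcases le_or_gt |x| (2 * u) with hx | hx
  · calc |x| * gaussianPDFReal 0 1 x
        ≤ (2 * u) * (15 * u * (m + Real.exp (-u ^ 2))) := by
          gcongr
          · exact gaussianPDFReal_nonneg _ _ _
          · exact gaussianPDFReal_le_measureReal_Ioi_add_exp hu x
      _ = 30 * u ^ 2 * (m + Real.exp (-u ^ 2)) := by ring
  · have habs : |x| ≤ Real.exp (x ^ 2 / 4) := by
      nlinarith [Real.add_one_le_exp (x ^ 2 / 4), sq_abs x, sq_nonneg (|x| - 2)]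
    calc |x| * gaussianPDFReal 0 1 x ≤ Real.exp (x ^ 2 / 4) * Real.exp (-x ^ 2 / 2) := by
          gcongr
          · exact gaussianPDFReal_nonneg _ _ _
          · exact gaussianPDFReal_zero_one_le_exp x
      _ = Real.exp (-(x ^ 2 / 4)) := by rw [← Real.exp_add]; congr 1; ring
      _ ≤ Real.exp (-u ^ 2) := by gcongr; nlinarith [sq_abs x]
      _ ≤ m + Real.exp (-u ^ 2) := le_add_of_nonneg_left hm
      _ ≤ 30 * u ^ 2 * (m + Real.exp (-u ^ 2)) :=
          le_mul_of_one_le_left (by positivity) (by nlinarith)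

lemma measureReal_gaussianReal_Ioi_right_le (a b : ℝ) :
    (gaussianReal 0 1).real (Set.Ioi b) ≤ 1 - (gaussianReal 0 1).real (Set.Ioc a b) := by
  rw [← probReal_compl_eq_one_sub measurableSet_Ioc]
  exact measureReal_mono fun x hx hab => (Set.mem_Ioi.1 hx).not_ge hab.2

lemma measureReal_gaussianReal_Ioi_neg_left_le (a b : ℝ) :
    (gaussianReal 0 1).real (Set.Ioi (-a)) ≤ 1 - (gaussianReal 0 1).real (Set.Ioc a b) := by
  have hneg := gaussianReal_map_neg (μ := 0) (v := 1)
  rw [neg_zero] at hneg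
  rw [← probReal_compl_eq_one_sub measurableSet_Ioc]
  conv_lhs => rw [← hneg]
  rw [map_measureReal_apply measurable_neg measurableSet_Ioi]
  exact measureReal_mono fun x hx hab => (neg_lt_neg_iff.1 (Set.mem_Ioi.1 hx)).not_gt hab.1

lemma abs_gaussianPDFReal_sub_le {u : ℝ} (hu : 1 ≤ u) (a b : ℝ) :
    |gaussianPDFReal 0 1 a - gaussianPDFReal 0 1 b|
      ≤ 15 * u * (1 - (gaussianReal 0 1).real (Set.Ioc a b) + Real.exp (-u ^ 2)) := by
  have ha := gaussianPDFReal_le_measureReal_Ioi_add_exp hu (-a)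
  have hb := gaussianPDFReal_le_measureReal_Ioi_add_exp hu b
  rw [gaussianPDFReal_zero_one_neg] at ha
  refine abs_sub_le_of_nonneg_of_le (gaussianPDFReal_nonneg 0 1 a) (ha.trans ?_)
    (gaussianPDFReal_nonneg 0 1 b) (hb.trans ?_)
  · gcongr
    exact measureReal_gaussianReal_Ioi_neg_left_le a b
  · gcongr
    exact measureReal_gaussianReal_Ioi_right_le a b

lemma abs_mul_gaussianPDFReal_sub_le {u : ℝ} (hu : 1 ≤ u) (a b : ℝ) :
    |a * gaussianPDFReal 0 1 a - b * gaussianPDFReal 0 1 b|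
      ≤ 60 * u ^ 2 * (1 - (gaussianReal 0 1).real (Set.Ioc a b) + Real.exp (-u ^ 2)) := by
  have ha := abs_mul_gaussianPDFReal_le_measureReal_Ioi_add_exp hu (-a)
  have hb := abs_mul_gaussianPDFReal_le_measureReal_Ioi_add_exp hu b
  have ha' := measureReal_gaussianReal_Ioi_neg_left_le a b
  have hb' := measureReal_gaussianReal_Ioi_right_le a b
  rw [gaussianPDFReal_zero_one_neg, abs_neg] at ha
  calc |a * gaussianPDFReal 0 1 a - b * gaussianPDFReal 0 1 b|
      ≤ |a| * gaussianPDFReal 0 1 a + |b| * gaussianPDFReal 0 1 b := by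
        refine (abs_sub _ _).trans_eq ?_
        simp only [abs_mul, abs_of_nonneg (gaussianPDFReal_nonneg 0 1 _)]
    _ ≤ 60 * u ^ 2 * (1 - (gaussianReal 0 1).real (Set.Ioc a b) + Real.exp (-u ^ 2)) := by
        nlinarith [sq_nonneg u]

end Mills

section Product

lemma measureReal_prod_apply {α β : Type*} [MeasurableSpace α] [MeasurableSpace β]
    {ν : Measure α} {ρ : Measure β} [IsFiniteMeasure ν] [IsFiniteMeasure ρ] {A : Set (α × β)}
    (hA : MeasurableSet A) :
    (ν.prod ρ).real A = ∫ y, ρ.real (Prod.mk y ⁻¹' A) ∂ν := by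
  rw [Measure.real, Measure.prod_apply hA, ← integral_toReal
    (measurable_measure_prodMk_left hA).aemeasurable (.of_forall fun _ => measure_lt_top _ _)]
  rfl

lemma measureReal_conv {G : Type*} [AddMonoid G] [MeasurableSpace G] [MeasurableAdd₂ G]
    (ν ρ : Measure G) [IsFiniteMeasure ν] [IsFiniteMeasure ρ] {A : Set G} (hA : MeasurableSet A) :
    (ν ∗ ρ).real A = ∫ y, ρ.real ((y + ·) ⁻¹' A) ∂ν := by
  rw [Measure.conv, map_measureReal_apply measurable_add hA,
    measureReal_prod_apply (measurable_add hA)]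
  rfl

end Product

section Combinatorics

lemma prod_one_add_exp_neg_le {ι : Type*} [Fintype ι] {u : ℝ}
    (hu : (Fintype.card ι : ℝ) ≤ Real.exp (u ^ 2)) :
    ∏ _l : ι, (1 + Real.exp (-u ^ 2)) ≤ 3 :=
  calc ∏ _l : ι, (1 + Real.exp (-u ^ 2))
      ≤ ∏ _l : ι, Real.exp (Real.exp (-u ^ 2)) := by
        gcongr
        linarith [Real.add_one_le_exp (Real.exp (-u ^ 2))]
    _ = Real.exp (Fintype.card ι * Real.exp (-u ^ 2)) := by
        rw [Finset.prod_const, Finset.card_univ, Real.exp_nat_mul]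
    _ ≤ Real.exp 1 := by
        gcongr
        rwa [Real.exp_neg, ← div_eq_mul_inv, div_le_one (Real.exp_pos _)]
    _ ≤ 3 := by linarith [Real.exp_one_lt_d9]

variable {ι : Type*} [DecidableEq ι]

lemma sum_mul_prod_erase_le (s : Finset ι) {p x : ι → ℝ} (hp : ∀ i, 0 ≤ p i)
    (hx : ∀ i, 0 ≤ x i) :
    ∑ j ∈ s, x j * ∏ l ∈ s.erase j, p l ≤ ∏ l ∈ s, (p l + x l) := by
  induction s using Finset.induction_on with
  | empty => simp
  | insert i s hi ih =>
    have hsum : ∑ j ∈ s, x j * ∏ l ∈ (insert i s).erase j, p l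
        = p i * ∑ j ∈ s, x j * ∏ l ∈ s.erase j, p l := by
      rw [Finset.mul_sum]
      refine Finset.sum_congr rfl fun j hj => ?_
      have hij : i ≠ j := fun h => hi (h ▸ hj)
      rw [Finset.erase_insert_of_ne hij, Finset.prod_insert (by simp [hi])]
      ring
    have hmono : ∏ l ∈ s, p l ≤ ∏ l ∈ s, (p l + x l) :=
      Finset.prod_le_prod (fun i _ => hp i) fun i _ => le_add_of_nonneg_right (hx i)
    rw [Finset.sum_insert hi, Finset.prod_insert hi, Finset.erase_insert hi, hsum, add_mul,
      add_comm]
    gcongr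
    · exact hp i
    · exact hx i

lemma sum_sum_mul_prod_erase_erase_le (s : Finset ι) {p x : ι → ℝ} (hp : ∀ i, 0 ≤ p i)
    (hx : ∀ i, 0 ≤ x i) :
    ∑ j ∈ s, ∑ k ∈ s.erase j, x j * x k * ∏ l ∈ (s.erase j).erase k, p l
      ≤ 4 * ∏ l ∈ s, (p l + x l) := by
  have hx2 : ∀ i, 0 ≤ x i / 2 := fun i => div_nonneg (hx i) zero_le_two
  calc ∑ j ∈ s, ∑ k ∈ s.erase j, x j * x k * ∏ l ∈ (s.erase j).erase k, p l
      = 4 * ∑ j ∈ s, x j / 2 * ∑ k ∈ s.erase j, x k / 2 * ∏ l ∈ (s.erase j).erase k, p l := by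
        simp_rw [Finset.mul_sum]
        exact Finset.sum_congr rfl fun j _ => Finset.sum_congr rfl fun k _ => by ring
    _ ≤ 4 * ∑ j ∈ s, x j / 2 * ∏ l ∈ s.erase j, (p l + x l / 2) := by
        gcongr with j _
        · exact hx2 j
        · exact sum_mul_prod_erase_le (s.erase j) hp hx2
    _ ≤ 4 * ∏ l ∈ s, (p l + x l / 2 + x l / 2) := by
        gcongr
        exact sum_mul_prod_erase_le s (fun i => add_nonneg (hp i) (hx2 i)) hx2
    _ = 4 * ∏ l ∈ s, (p l + x l) := by simp_rw [add_assoc, add_halves]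

variable [Fintype ι]

lemma prod_single_add_single_self {M : Type*} [CommMonoid M] (K : ℕ → ι → M) (j : ι) :
    ∏ l, K ((Pi.single j 1 + Pi.single j 1 : ι → ℕ) l) l
      = K 2 j * ∏ l ∈ Finset.univ.erase j, K 0 l := by
  rw [← Finset.mul_prod_erase _ _ (Finset.mem_univ j)]
  congr 1
  · simp
  · refine Finset.prod_congr rfl fun l hl => ?_
    simp [Pi.single_eq_of_ne (Finset.ne_of_mem_erase hl)]

lemma prod_single_add_single_of_ne {M : Type*} [CommMonoid M] (K : ℕ → ι → M) {j k : ι}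
    (hjk : k ≠ j) :
    ∏ l, K ((Pi.single j 1 + Pi.single k 1 : ι → ℕ) l) l
      = K 1 j * K 1 k * ∏ l ∈ (Finset.univ.erase j).erase k, K 0 l := by
  rw [← Finset.mul_prod_erase _ _ (Finset.mem_univ j),
    ← Finset.mul_prod_erase _ _ (Finset.mem_erase.2 ⟨hjk, Finset.mem_univ k⟩), mul_assoc]
  congr 1
  · simp [Pi.single_eq_of_ne hjk.symm]
  congr 1
  · simp [Pi.single_eq_of_ne hjk]
  · refine Finset.prod_congr rfl fun l hl => ?_
    have hlk := Finset.ne_of_mem_erase hl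
    have hlj := Finset.ne_of_mem_erase (Finset.mem_of_mem_erase hl)
    simp [Pi.single_eq_of_ne hlk, Pi.single_eq_of_ne hlj]

lemma sum_sum_prod_single_add_single {R : Type*} [CommSemiring R] (K : ℕ → ι → R) :
    ∑ j, ∑ k, ∏ l, K ((Pi.single j 1 + Pi.single k 1 : ι → ℕ) l) l
      = ∑ j, K 2 j * ∏ l ∈ Finset.univ.erase j, K 0 l
        + ∑ j, ∑ k ∈ Finset.univ.erase j,
          K 1 j * K 1 k * ∏ l ∈ (Finset.univ.erase j).erase k, K 0 l := by
  rw [← Finset.sum_add_distrib]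
  refine Finset.sum_congr rfl fun j _ => ?_
  rw [← Finset.add_sum_erase _ _ (Finset.mem_univ j), prod_single_add_single_self]
  congr 1
  exact Finset.sum_congr rfl fun k hk =>
    prod_single_add_single_of_ne K (Finset.ne_of_mem_erase hk)

-- The pairs `(j, k)` index the second-order derivatives of a product of `card ι` factors, and
-- `K m l` bounds the `m`-th derivative of the factor `l`.
lemma sum_sum_prod_single_add_single_le {K : ℕ → ι → ℝ} {x : ι → ℝ} {A B : ℝ}
    (hK : ∀ m l, 0 ≤ K m l) (hx : ∀ l, 0 ≤ x l) (hA : 0 ≤ A) (hB : 0 ≤ B)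
    (h1 : ∀ l, K 1 l ≤ A * x l) (h2 : ∀ l, K 2 l ≤ B * x l) :
    ∑ j, ∑ k, ∏ l, K ((Pi.single j 1 + Pi.single k 1 : ι → ℕ) l) l
      ≤ (B + 4 * A ^ 2) * ∏ l, (K 0 l + x l) := by
  have hdiag : ∑ j, K 2 j * ∏ l ∈ Finset.univ.erase j, K 0 l ≤ B * ∏ l, (K 0 l + x l) :=
    calc ∑ j, K 2 j * ∏ l ∈ Finset.univ.erase j, K 0 l
        ≤ ∑ j, B * x j * ∏ l ∈ Finset.univ.erase j, K 0 l := by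
          gcongr with j _
          · exact Finset.prod_nonneg fun l _ => hK 0 l
          · exact h2 j
      _ ≤ B * ∏ l, (K 0 l + x l) := by
          simp_rw [mul_assoc, ← Finset.mul_sum]
          gcongr
          exact sum_mul_prod_erase_le _ (hK 0) hx
  have hoff : ∑ j, ∑ k ∈ Finset.univ.erase j,
      K 1 j * K 1 k * ∏ l ∈ (Finset.univ.erase j).erase k, K 0 l
        ≤ A ^ 2 * (4 * ∏ l, (K 0 l + x l)) :=
    calc _ ≤ ∑ j, ∑ k ∈ Finset.univ.erase j,
          (A * x j) * (A * x k) * ∏ l ∈ (Finset.univ.erase j).erase k, K 0 l := by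
          gcongr with j _ k _
          · exact Finset.prod_nonneg fun l _ => hK 0 l
          · exact hK 1 k
          · exact mul_nonneg hA (hx j)
          · exact h1 j
          · exact h1 k
      _ = A ^ 2 * ∑ j, ∑ k ∈ Finset.univ.erase j,
          x j * x k * ∏ l ∈ (Finset.univ.erase j).erase k, K 0 l := by
          simp_rw [Finset.mul_sum]
          exact Finset.sum_congr rfl fun j _ => Finset.sum_congr rfl fun k _ => by ring
      _ ≤ _ := by
          gcongr
          exact sum_sum_mul_prod_erase_erase_le _ (hK 0) hx
  rw [sum_sum_prod_single_add_single]
  linarith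

end Combinatorics

section GaussianLaw

open scoped Matrix

variable {ι : Type*} [Fintype ι]

lemma continuous_cexp_dotProduct_mul_I (ξ : ι → ℝ) :
    Continuous fun x : ι → ℝ => Complex.exp ((ξ ⬝ᵥ x : ℝ) * Complex.I) := by
  fun_prop

lemma ext_of_integral_cexp_dotProduct {ν ν' : Measure (ι → ℝ)} [IsFiniteMeasure ν]
    [IsFiniteMeasure ν']
    (h : ∀ ξ : ι → ℝ, ∫ x, Complex.exp ((ξ ⬝ᵥ x : ℝ) * Complex.I) ∂ν
      = ∫ x, Complex.exp ((ξ ⬝ᵥ x : ℝ) * Complex.I) ∂ν') :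
    ν = ν' := by
  classical
  refine Measure.ext_of_charFunDual (funext fun L => ?_)
  obtain ⟨ξ, hξ⟩ : ∃ ξ : ι → ℝ, ∀ x, L x = ξ ⬝ᵥ x := by
    refine ⟨fun j => L (Pi.single j 1), fun x => ?_⟩
    conv_lhs => rw [pi_eq_sum_univ' x]
    rw [map_sum]
    exact Finset.sum_congr rfl fun j _ => by rw [map_smul, smul_eq_mul, mul_comm]
  simp_rw [charFunDual_apply, hξ]
  exact h ξ

variable [DecidableEq ι]

/-- The centred Gaussian law on `ι → ℝ` with covariance matrix `S`. The carrier is the plain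
function space rather than `EuclideanSpace ℝ ι`, because rectangles and the sup norm live there.
As for `multivariateGaussian`, the value is the Dirac mass at `0` unless `S` is positive
semidefinite. -/
noncomputable def gaussianLaw (S : Matrix ι ι ℝ) : Measure (ι → ℝ) :=
  (multivariateGaussian 0 S).map (EuclideanSpace.equiv ι ℝ)

variable {S T : Matrix ι ι ℝ}

instance isGaussian_gaussianLaw (S : Matrix ι ι ℝ) : IsGaussian (gaussianLaw S) :=
  isGaussian_map_equiv _

lemma integral_gaussianLaw {E : Type*} [NormedAddCommGroup E] [NormedSpace ℝ E]
    (f : (ι → ℝ) → E) :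
    ∫ x, f x ∂gaussianLaw S = ∫ x, f (WithLp.ofLp x) ∂multivariateGaussian 0 S :=
  integral_map_equiv (EuclideanSpace.equiv ι ℝ).toHomeomorph.toMeasurableEquiv f

lemma integral_cexp_dotProduct_gaussianLaw (hS : S.PosSemidef) (ξ : ι → ℝ) :
    ∫ x, Complex.exp ((ξ ⬝ᵥ x : ℝ) * Complex.I) ∂gaussianLaw S
      = Complex.exp (-(ξ ⬝ᵥ S *ᵥ ξ : ℝ) / 2) := by
  have h := charFun_multivariateGaussian (μ := 0) hS (WithLp.toLp 2 ξ)
  rw [charFun_apply] at h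
  rw [integral_gaussianLaw]
  simpa [PiLp.inner_apply, dotProduct, neg_div] using h

lemma eq_gaussianLaw {ν : Measure (ι → ℝ)} [IsFiniteMeasure ν] (hS : S.PosSemidef)
    (h : ∀ ξ : ι → ℝ, ∫ x, Complex.exp ((ξ ⬝ᵥ x : ℝ) * Complex.I) ∂ν
      = Complex.exp (-(ξ ⬝ᵥ S *ᵥ ξ : ℝ) / 2)) :
    ν = gaussianLaw S :=
  ext_of_integral_cexp_dotProduct fun ξ => by
    rw [h, integral_cexp_dotProduct_gaussianLaw hS]

lemma gaussianLaw_conv_gaussianLaw (hS : S.PosSemidef) (hT : T.PosSemidef) :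
    gaussianLaw S ∗ gaussianLaw T = gaussianLaw (S + T) := by
  refine eq_gaussianLaw (hS.add hT) fun ξ => ?_
  rw [Measure.conv, integral_map (by fun_prop)
    (continuous_cexp_dotProduct_mul_I ξ).aestronglyMeasurable]
  simp_rw [dotProduct_add, Complex.ofReal_add, add_mul, Complex.exp_add]
  rw [integral_prod_mul (fun x : ι → ℝ => Complex.exp ((ξ ⬝ᵥ x : ℝ) * Complex.I))
    (fun x : ι → ℝ => Complex.exp ((ξ ⬝ᵥ x : ℝ) * Complex.I)),
    integral_cexp_dotProduct_gaussianLaw hS, integral_cexp_dotProduct_gaussianLaw hT,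
    ← Complex.exp_add, Matrix.add_mulVec, dotProduct_add]
  push_cast
  ring_nf

lemma gaussianLaw_map_smul (hS : S.PosSemidef) (c : ℝ) :
    (gaussianLaw S).map (fun x => c • x) = gaussianLaw (c ^ 2 • S) := by
  have : IsProbabilityMeasure ((gaussianLaw S).map (fun x => c • x)) :=
    Measure.isProbabilityMeasure_map (by fun_prop)
  refine eq_gaussianLaw (hS.smul (sq_nonneg c)) fun ξ => ?_
  rw [integral_map (by fun_prop) (continuous_cexp_dotProduct_mul_I ξ).aestronglyMeasurable]
  simp_rw [dotProduct_smul, ← smul_dotProduct]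
  rw [integral_cexp_dotProduct_gaussianLaw hS]
  simp only [Matrix.mulVec_smul, Matrix.smul_mulVec, dotProduct_smul, smul_dotProduct,
    smul_eq_mul]
  ring_nf

lemma gaussianLaw_map_neg (hS : S.PosSemidef) :
    (gaussianLaw S).map (fun x => -x) = gaussianLaw S := by
  simpa using gaussianLaw_map_smul hS (-1)

lemma gaussianLaw_map_eval (hS : S.PosSemidef) (j : ι) :
    (gaussianLaw S).map (fun x => x j) = gaussianReal 0 (S j j).toNNReal := by
  rw [gaussianLaw, Measure.map_map (measurable_pi_apply j) (by fun_prop)]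
  exact (measurePreserving_eval_multivariateGaussian hS).map_eq

lemma gaussianLaw_smul_one (v : NNReal) :
    gaussianLaw ((v : ℝ) • (1 : Matrix ι ι ℝ)) = Measure.pi fun _ => gaussianReal 0 v := by
  refine (eq_gaussianLaw (Matrix.PosSemidef.one.smul v.2) fun ξ => ?_).symm
  simp_rw [dotProduct, Complex.ofReal_sum, Finset.sum_mul, Complex.exp_sum, Complex.ofReal_mul]
  rw [integral_fintype_prod_eq_prod
    (f := fun i (x : ℝ) => Complex.exp (ξ i * x * Complex.I))]
  simp_rw [← charFun_apply_real, charFun_gaussianReal, ← Complex.exp_sum]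
  congr 1
  simp only [Complex.ofReal_zero, mul_zero, zero_mul, zero_sub, Matrix.smul_mulVec,
    Matrix.one_mulVec, Pi.smul_apply, smul_eq_mul, Complex.ofReal_mul, neg_div, Finset.sum_div,
    Finset.sum_neg_distrib]
  exact congrArg Neg.neg (Finset.sum_congr rfl fun i _ => by simp; ring)

lemma covariance_eval_gaussianLaw (hS : S.PosSemidef) (j k : ι) :
    cov[fun x => x j, fun x => x k; gaussianLaw S] = S j k := by
  rw [gaussianLaw, covariance_map (measurable_pi_apply j).aestronglyMeasurable
    (measurable_pi_apply k).aestronglyMeasurable (by fun_prop)]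
  exact covariance_eval_multivariateGaussian hS j k

end GaussianLaw

section Kernels

open Complex (I)

/-- The Fourier transform of the heat kernel of variance `v`. -/
noncomputable def heatMultiplier (v s : ℝ) : ℂ := Complex.exp (-(v * s ^ 2 / 2) : ℝ)

/-- The Fourier transform of the indicator of the interval `(a, b]`, for `a ≤ b`. -/
noncomputable def fourierIoc (a b s : ℝ) : ℂ := ∫ x in a..b, Complex.exp ((-(s * x) : ℝ) * I)

/-- The `m`-th derivative, at `y`, of the indicator of `(a, b]` smoothed by the heat kernel of
variance `v`, written through Fourier inversion so that all orders `m` are treated alike. -/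
noncomputable def smoothedIndicatorDeriv (v a b : ℝ) (m : ℕ) (y : ℝ) : ℂ :=
  (2 * Real.pi : ℂ)⁻¹ *
    ∫ s : ℝ, (s * I) ^ m * fourierIoc a b s * heatMultiplier v s * Complex.exp ((s * y : ℝ) * I)

@[fun_prop]
lemma continuous_heatMultiplier (v : ℝ) : Continuous (heatMultiplier v) := by
  unfold heatMultiplier; fun_prop

lemma norm_heatMultiplier (v s : ℝ) : ‖heatMultiplier v s‖ = Real.exp (-(v * s ^ 2 / 2)) := by
  rw [heatMultiplier, Complex.norm_exp, Complex.ofReal_re]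

lemma norm_fourierIoc_le (a b s : ℝ) : ‖fourierIoc a b s‖ ≤ |b - a| := by
  have h := intervalIntegral.norm_integral_le_of_norm_le_const (a := a) (b := b) (C := 1)
    (f := fun x => Complex.exp ((-(s * x) : ℝ) * I))
    fun x _ => (Complex.norm_exp_ofReal_mul_I _).le
  rwa [one_mul] at h

@[fun_prop]
lemma continuous_fourierIoc (a b : ℝ) : Continuous (fourierIoc a b) := by
  refine intervalIntegral.continuous_parametric_intervalIntegral_of_continuous' ?_ a b
  simp only [Function.uncurry_def]
  fun_prop

lemma mul_I_mul_fourierIoc (a b s : ℝ) :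
    s * I * fourierIoc a b s
      = Complex.exp ((-(s * a) : ℝ) * I) - Complex.exp ((-(s * b) : ℝ) * I) := by
  have hderiv : ∀ x ∈ Set.uIcc a b, HasDerivAt (fun x : ℝ => -Complex.exp ((-(s * x) : ℝ) * I))
      (s * I * Complex.exp ((-(s * x) : ℝ) * I)) x := fun x _ => by
    have h : HasDerivAt (fun x : ℝ => ((-(s * x) : ℝ) : ℂ) * I) ((-(s * 1) : ℝ) * I) x :=
      (((hasDerivAt_id x).const_mul s).neg.ofReal_comp).mul_const I
    refine h.cexp.neg.congr_deriv ?_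
    push_cast
    ring
  have hFTC := intervalIntegral.integral_eq_sub_of_hasDerivAt hderiv
    (Continuous.intervalIntegrable (by fun_prop) _ _)
  rw [intervalIntegral.integral_const_mul] at hFTC
  rw [fourierIoc, hFTC]
  ring

lemma stronglyMeasurable_smoothedIndicatorDeriv (v a b : ℝ) (m : ℕ) :
    StronglyMeasurable (smoothedIndicatorDeriv v a b m) := by
  unfold smoothedIndicatorDeriv
  refine StronglyMeasurable.const_mul (StronglyMeasurable.integral_prod_right
    (f := fun y s : ℝ => _) (Continuous.stronglyMeasurable ?_)) _
  simp only [Function.uncurry_def]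
  fun_prop

variable {v : ℝ}

lemma integrable_abs_pow_mul_exp_neg (hv : 0 < v) (m : ℕ) :
    Integrable fun s : ℝ => |s| ^ m * Real.exp (-(v * s ^ 2 / 2)) := by
  refine (integrable_rpow_mul_exp_neg_mul_sq (b := v / 2) (half_pos hv) (s := m)
    (neg_one_lt_zero.trans_le m.cast_nonneg)).norm.congr (.of_forall fun s => ?_)
  simp only [Real.rpow_natCast, norm_mul, norm_pow, Real.norm_eq_abs, Real.abs_exp]
  ring_nf

lemma integrable_pow_mul_heatMultiplier (hv : 0 < v) (m : ℕ) {f : ℝ → ℂ} (hf : Continuous f)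
    {c : ℝ} (hc : ∀ s, ‖f s‖ ≤ c) :
    Integrable fun s : ℝ => (s * I) ^ m * f s * heatMultiplier v s := by
  refine ((integrable_abs_pow_mul_exp_neg hv m).const_mul c).mono'
    (Continuous.aestronglyMeasurable (by fun_prop)) (.of_forall fun s => ?_)
  rw [norm_mul, norm_mul, norm_pow, norm_heatMultiplier, norm_mul, Complex.norm_real,
    Complex.norm_I, mul_one, Real.norm_eq_abs, mul_comm (|s| ^ m), mul_assoc]
  gcongr
  exact hc s

lemma integrable_pow_mul_cexp_mul_heatMultiplier (hv : 0 < v) (m : ℕ) (x : ℝ) :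
    Integrable fun s : ℝ => (s * I) ^ m * Complex.exp ((s * x : ℝ) * I) * heatMultiplier v s :=
  integrable_pow_mul_heatMultiplier hv m (by fun_prop)
    fun s => (Complex.norm_exp_ofReal_mul_I _).le

end Kernels

section KernelValues

open Complex (I)

variable {v : NNReal}

lemma gaussianPDFReal_zero_sub (v : NNReal) (x y : ℝ) :
    gaussianPDFReal 0 v (y - x) = gaussianPDFReal y v x := by
  simp only [gaussianPDFReal, sub_zero]
  rw [← neg_sub x y, neg_sq]

lemma integral_cexp_mul_heatMultiplier (hv : v ≠ 0) (x : ℝ) :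
    ∫ s : ℝ, Complex.exp ((s * x : ℝ) * I) * heatMultiplier v s
      = 2 * Real.pi * gaussianPDFReal 0 v x := by
  have hv0 : (0 : ℝ) < v := NNReal.coe_pos.2 (pos_iff_ne_zero.2 hv)
  have h := fourierIntegral_gaussian (b := ((v / 2 : ℝ) : ℂ))
    (by rw [Complex.ofReal_re]; exact half_pos hv0) x
  have hsqrt : √(Real.pi / (v / 2)) = 2 * Real.pi * (√(2 * Real.pi * v))⁻¹ := by
    rw [← div_eq_mul_inv, eq_div_iff (by positivity), ← Real.sqrt_mul (by positivity),
      show Real.pi / (v / 2) * (2 * Real.pi * v) = (2 * Real.pi) ^ 2 by field_simp,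
      Real.sqrt_sq (by positivity)]
  calc ∫ s : ℝ, Complex.exp ((s * x : ℝ) * I) * heatMultiplier v s
      = ∫ s : ℝ, Complex.exp (I * x * s) * Complex.exp (-((v / 2 : ℝ) : ℂ) * s ^ 2) := by
        congr 1
        ext s
        rw [heatMultiplier]
        push_cast
        ring_nf
    _ = (√(Real.pi / (v / 2)) * Real.exp (-x ^ 2 / (2 * v)) : ℝ) := by
        rw [h, ← Complex.ofReal_div, show (1 / 2 : ℂ) = ((1 / 2 : ℝ) : ℂ) by push_cast; rfl,
          ← Complex.ofReal_cpow (by positivity), ← Real.sqrt_eq_rpow]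
        push_cast
        congr 3
        ring
    _ = 2 * Real.pi * gaussianPDFReal 0 v x := by
        rw [hsqrt, gaussianPDFReal, sub_zero]
        push_cast
        ring

lemma integral_mul_cexp_mul_heatMultiplier (hv : v ≠ 0) (x : ℝ) :
    ∫ s : ℝ, s * I * Complex.exp ((s * x : ℝ) * I) * heatMultiplier v s
      = 2 * Real.pi * (-(x / v) * gaussianPDFReal 0 v x) := by
  have hv0 : (0 : ℝ) < v := NNReal.coe_pos.2 (pos_iff_ne_zero.2 hv)
  have hint0 := integrable_pow_mul_cexp_mul_heatMultiplier hv0 0 x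
  have hint1 := integrable_pow_mul_cexp_mul_heatMultiplier hv0 1 x
  simp only [pow_zero, one_mul, pow_one] at hint0 hint1
  have hderiv : ∀ s : ℝ, HasDerivAt
      (fun s : ℝ => Complex.exp ((s * x : ℝ) * I) * heatMultiplier v s)
      (x * I * (Complex.exp ((s * x : ℝ) * I) * heatMultiplier v s)
        + v * I * (s * I * Complex.exp ((s * x : ℝ) * I) * heatMultiplier v s)) s := fun s => by
    have hosc : HasDerivAt (fun s : ℝ => ((s * x : ℝ) : ℂ) * I) (((1 * x : ℝ) : ℂ) * I) s :=
      ((hasDerivAt_id s).mul_const x).ofReal_comp.mul_const I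
    have hheat : HasDerivAt (heatMultiplier v) (heatMultiplier v s * (-(v * s) : ℝ)) s := by
      have hquad : HasDerivAt (fun s : ℝ => ((-(v * s ^ 2 / 2) : ℝ) : ℂ)) (-(v * s) : ℝ) s :=
        (((((hasDerivAt_id s).pow 2).const_mul (v : ℝ)).div_const 2).neg.congr_deriv
          (by simp; ring)).ofReal_comp
      exact hquad.cexp
    refine (hosc.cexp.mul hheat).congr_deriv ?_
    push_cast
    linear_combination
      -(v * s * Complex.exp (s * x * I) * heatMultiplier v s) * Complex.I_sq
  -- The integral of a derivative vanishes, which is an affine relation between the two moments.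
  have hzero := integral_eq_zero_of_hasDerivAt_of_integrable hderiv
    ((hint0.const_mul _).add (hint1.const_mul _)) hint0
  rw [integral_add (hint0.const_mul _) (hint1.const_mul _), integral_const_mul,
    integral_const_mul, integral_cexp_mul_heatMultiplier hv] at hzero
  have hv' : (v : ℂ) ≠ 0 := by exact_mod_cast hv
  refine mul_left_cancel₀ (mul_ne_zero hv' Complex.I_ne_zero) ?_
  rw [eq_neg_of_add_eq_zero_right hzero]
  field_simp

lemma smoothedIndicatorDeriv_zero (hv : v ≠ 0) {a b : ℝ} (hab : a ≤ b) (y : ℝ) :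
    smoothedIndicatorDeriv v a b 0 y = (gaussianReal y v).real (Set.Ioc a b) := by
  have hv0 : (0 : ℝ) < v := NNReal.coe_pos.2 (pos_iff_ne_zero.2 hv)
  have hint : Integrable (Function.uncurry fun x s : ℝ =>
      Complex.exp ((s * (y - x) : ℝ) * I) * heatMultiplier v s)
      ((volume.restrict (Set.uIoc a b)).prod volume) := by
    rw [Set.uIoc_of_le hab]
    refine ((integrable_const (1 : ℝ)).mul_prod (integrable_abs_pow_mul_exp_neg hv0 0)).mono'
      (Continuous.aestronglyMeasurable ?_) (.of_forall fun z => ?_)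
    · simp only [Function.uncurry_def]
      fun_prop
    · rw [Function.uncurry_def, norm_mul, Complex.norm_exp_ofReal_mul_I, norm_heatMultiplier,
        pow_zero, one_mul, one_mul]
  have hswap : ∀ s : ℝ, fourierIoc a b s * heatMultiplier v s * Complex.exp ((s * y : ℝ) * I)
      = ∫ x in a..b, Complex.exp ((s * (y - x) : ℝ) * I) * heatMultiplier v s := fun s => by
    rw [intervalIntegral.integral_mul_const, fourierIoc, mul_right_comm,
      ← intervalIntegral.integral_mul_const]
    congr 2
    ext x
    rw [← Complex.exp_add]
    congr 1
    push_cast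
    ring
  simp_rw [smoothedIndicatorDeriv, pow_zero, one_mul, hswap]
  rw [← intervalIntegral_integral_swap hint]
  simp_rw [integral_cexp_mul_heatMultiplier hv, gaussianPDFReal_zero_sub]
  rw [intervalIntegral.integral_const_mul, intervalIntegral.integral_ofReal,
    measureReal_gaussianReal y hv, ← intervalIntegral.integral_of_le hab]
  have hpi : (Real.pi : ℂ) ≠ 0 := by exact_mod_cast Real.pi_ne_zero
  field_simp

lemma smoothedIndicatorDeriv_succ (hv : v ≠ 0) (a b : ℝ) (m : ℕ) (y : ℝ) :
    smoothedIndicatorDeriv v a b (m + 1) y = (2 * Real.pi : ℂ)⁻¹ *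
      ((∫ s : ℝ, (s * I) ^ m * Complex.exp ((s * (y - a) : ℝ) * I) * heatMultiplier v s)
        - ∫ s : ℝ, (s * I) ^ m * Complex.exp ((s * (y - b) : ℝ) * I) * heatMultiplier v s) := by
  have hv0 : (0 : ℝ) < v := NNReal.coe_pos.2 (pos_iff_ne_zero.2 hv)
  have hshift : ∀ c s : ℝ, Complex.exp ((s * (y - c) : ℝ) * I)
      = Complex.exp ((-(s * c) : ℝ) * I) * Complex.exp ((s * y : ℝ) * I) := fun c s => by
    rw [← Complex.exp_add]
    congr 1
    push_cast
    ring
  rw [smoothedIndicatorDeriv,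
    ← integral_sub (integrable_pow_mul_cexp_mul_heatMultiplier hv0 m _)
      (integrable_pow_mul_cexp_mul_heatMultiplier hv0 m _)]
  congr 2
  ext s
  rw [pow_succ, mul_assoc _ (_ * I), mul_I_mul_fourierIoc, hshift a, hshift b]
  ring

lemma smoothedIndicatorDeriv_one (hv : v ≠ 0) (a b y : ℝ) :
    smoothedIndicatorDeriv v a b 1 y
      = (gaussianPDFReal y v a - gaussianPDFReal y v b : ℝ) := by
  have hpi : (Real.pi : ℂ) ≠ 0 := by exact_mod_cast Real.pi_ne_zero
  rw [smoothedIndicatorDeriv_succ hv]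
  simp_rw [pow_zero, one_mul, integral_cexp_mul_heatMultiplier hv, gaussianPDFReal_zero_sub]
  push_cast
  field_simp

lemma smoothedIndicatorDeriv_two (hv : v ≠ 0) (a b y : ℝ) :
    smoothedIndicatorDeriv v a b 2 y
      = ((a - y) / v * gaussianPDFReal y v a - (b - y) / v * gaussianPDFReal y v b : ℝ) := by
  have hpi : (Real.pi : ℂ) ≠ 0 := by exact_mod_cast Real.pi_ne_zero
  rw [smoothedIndicatorDeriv_succ hv]
  simp_rw [pow_one, integral_mul_cexp_mul_heatMultiplier hv, gaussianPDFReal_zero_sub]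
  push_cast
  field_simp
  ring

end KernelValues

section KernelBounds

variable {v : NNReal}

lemma gaussianPDFReal_eq_inv_sqrt_mul (hv : v ≠ 0) (y x : ℝ) :
    gaussianPDFReal y v x = (√v)⁻¹ * gaussianPDFReal 0 1 ((x - y) / √v) := by
  have hv0 : (0 : ℝ) < v := NNReal.coe_pos.2 (pos_iff_ne_zero.2 hv)
  rw [gaussianPDFReal_zero_one, gaussianPDFReal, Real.sqrt_mul (by positivity), mul_inv, div_pow,
    Real.sq_sqrt hv0.le]
  field_simp

lemma measureReal_gaussianReal_Ioc (hv : v ≠ 0) (y a b : ℝ) :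
    (gaussianReal y v).real (Set.Ioc a b)
      = (gaussianReal 0 1).real (Set.Ioc ((a - y) / √v) ((b - y) / √v)) := by
  have hv0 : (0 : ℝ) < √v := Real.sqrt_pos.2 (NNReal.coe_pos.2 (pos_iff_ne_zero.2 hv))
  have hmap : (gaussianReal 0 1).map (fun x => √v * x + y) = gaussianReal y v := by
    have hv1 : NNReal.mk (√v ^ 2) (sq_nonneg _) = v := NNReal.eq (Real.sq_sqrt v.2)
    rw [← Function.comp_def (· + y) (√v * ·), ← Measure.map_map (by fun_prop) (by fun_prop),
      gaussianReal_map_const_mul, gaussianReal_map_add_const, mul_zero, zero_add, mul_one, hv1]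
  rw [← hmap, map_measureReal_apply (by fun_prop) measurableSet_Ioc]
  congr 1
  ext x
  simp only [Set.mem_preimage, Set.mem_Ioc, div_lt_iff₀ hv0, le_div_iff₀ hv0, sub_lt_iff_lt_add,
    le_sub_iff_add_le, mul_comm]

lemma norm_smoothedIndicatorDeriv_one_le (hv : v ≠ 0) {u : ℝ} (hu : 1 ≤ u) (a b y : ℝ) :
    ‖smoothedIndicatorDeriv v a b 1 y‖ ≤ 15 * u / √v *
      (1 - (gaussianReal y v).real (Set.Ioc a b) + Real.exp (-u ^ 2)) := by
  rw [smoothedIndicatorDeriv_one hv, Complex.norm_real, Real.norm_eq_abs,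
    gaussianPDFReal_eq_inv_sqrt_mul hv, gaussianPDFReal_eq_inv_sqrt_mul hv y b, ← mul_sub,
    abs_mul, abs_of_nonneg (by positivity), measureReal_gaussianReal_Ioc hv]
  calc _ ≤ (√v)⁻¹ * _ :=
        mul_le_mul_of_nonneg_left (abs_gaussianPDFReal_sub_le hu _ _) (by positivity)
    _ = _ := by ring

lemma norm_smoothedIndicatorDeriv_two_le (hv : v ≠ 0) {u : ℝ} (hu : 1 ≤ u) (a b y : ℝ) :
    ‖smoothedIndicatorDeriv v a b 2 y‖ ≤ 60 * u ^ 2 / v *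
      (1 - (gaussianReal y v).real (Set.Ioc a b) + Real.exp (-u ^ 2)) := by
  have hscale : ∀ x, (x - y) / v * gaussianPDFReal y v x
      = (v : ℝ)⁻¹ * ((x - y) / √v * gaussianPDFReal 0 1 ((x - y) / √v)) := fun x => by
    rw [gaussianPDFReal_eq_inv_sqrt_mul hv]
    ring
  rw [smoothedIndicatorDeriv_two hv, Complex.norm_real, Real.norm_eq_abs, hscale, hscale,
    ← mul_sub, abs_mul, abs_of_nonneg (by positivity), measureReal_gaussianReal_Ioc hv]
  calc _ ≤ (v : ℝ)⁻¹ * _ :=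
        mul_le_mul_of_nonneg_left (abs_mul_gaussianPDFReal_sub_le hu _ _) (by positivity)
    _ = _ := by ring

/-- The mixed derivative of multi-index `m`, at `y`, of the indicator of the rectangle with corners
`a` and `b` smoothed by the heat kernel of variance `v`. -/
noncomputable def smoothedBoxDeriv {ι : Type*} [Fintype ι] (v : ℝ) (a b : ι → ℝ) (m : ι → ℕ)
    (y : ι → ℝ) : ℂ :=
  ∏ l, smoothedIndicatorDeriv v (a l) (b l) (m l) (y l)

lemma stronglyMeasurable_smoothedBoxDeriv {ι : Type*} [Fintype ι] (v : ℝ) (a b : ι → ℝ)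
    (m : ι → ℕ) : StronglyMeasurable (smoothedBoxDeriv v a b m) :=
  Finset.stronglyMeasurable_fun_prod _ fun l _ =>
    (stronglyMeasurable_smoothedIndicatorDeriv v (a l) (b l) (m l)).comp_measurable
      (measurable_pi_apply l)

lemma sum_sum_norm_smoothedBoxDeriv_le {ι : Type*} [Fintype ι] [DecidableEq ι]
    (hv : v ≠ 0) {u : ℝ} (hu : 1 ≤ u) (hcard : Fintype.card ι ≤ Real.exp (u ^ 2))
    {a b : ι → ℝ} (hab : ∀ l, a l ≤ b l) (y : ι → ℝ) :
    ∑ j, ∑ k, ‖smoothedBoxDeriv v a b (Pi.single j 1 + Pi.single k 1) y‖ ≤ 2880 * u ^ 2 / v := by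
  set p : ι → ℝ := fun l => (gaussianReal (y l) v).real (Set.Ioc (a l) (b l))
  set x : ι → ℝ := fun l => 1 - p l + Real.exp (-u ^ 2) with hx
  have hp : ∀ l, p l ≤ 1 := fun l => measureReal_le_one
  have hv0 : (0 : ℝ) < v := NNReal.coe_pos.2 (pos_iff_ne_zero.2 hv)
  have hzero : ∀ l, ‖smoothedIndicatorDeriv v (a l) (b l) 0 (y l)‖ + x l
      = 1 + Real.exp (-u ^ 2) := fun l => by
    rw [smoothedIndicatorDeriv_zero hv (hab l), Complex.norm_real, Real.norm_eq_abs,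
      abs_of_nonneg measureReal_nonneg]
    simp only [hx, p]
    ring
  have hsum := sum_sum_prod_single_add_single_le
    (K := fun m l => ‖smoothedIndicatorDeriv v (a l) (b l) m (y l)‖) (x := x)
    (A := 15 * u / √v) (B := 60 * u ^ 2 / v) (fun _ _ => norm_nonneg _)
    (fun l => by have := hp l; have := Real.exp_pos (-u ^ 2); simp only [hx]; linarith)
    (by positivity) (by positivity)
    (fun l => norm_smoothedIndicatorDeriv_one_le hv hu _ _ _)
    (fun l => norm_smoothedIndicatorDeriv_two_le hv hu _ _ _)
  simp_rw [smoothedBoxDeriv, norm_prod]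
  calc _ ≤ _ := hsum
    _ = 960 * u ^ 2 / v * ∏ _l : ι, (1 + Real.exp (-u ^ 2)) := by
        rw [Finset.prod_congr rfl fun l _ => hzero l, div_pow, Real.sq_sqrt hv0.le]
        ring
    _ ≤ 960 * u ^ 2 / v * 3 := by
        gcongr
        exact prod_one_add_exp_neg_le hcard
    _ = 2880 * u ^ 2 / v := by ring

end KernelBounds

section Interpolation

open Complex (I)
open scoped Matrix

variable {ι : Type*} [Fintype ι]

/-- The integrand of the Fourier representation of the Gaussian measure with covariance `P` of the
rectangle with corners `a` and `b`, differentiated according to the multi-index `m`. -/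
noncomputable def fourierIntegrand (P : Matrix ι ι ℝ) (a b : ι → ℝ) (m : ι → ℕ) (ξ : ι → ℝ) : ℂ :=
  (∏ l, ((ξ l * I) ^ m l * fourierIoc (a l) (b l) (ξ l))) * Real.exp (-(ξ ⬝ᵥ P *ᵥ ξ) / 2)

variable {P Q : Matrix ι ι ℝ} {v : NNReal} {a b : ι → ℝ}

lemma norm_fourierIntegrand_le (h : (P - Q).PosSemidef) (a b : ι → ℝ) (m : ι → ℕ) (ξ : ι → ℝ) :
    ‖fourierIntegrand P a b m ξ‖ ≤ ‖fourierIntegrand Q a b m ξ‖ := by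
  have hle : ξ ⬝ᵥ Q *ᵥ ξ ≤ ξ ⬝ᵥ P *ᵥ ξ := by
    have := h.dotProduct_mulVec_nonneg ξ
    rw [star_trivial, Matrix.sub_mulVec, dotProduct_sub] at this
    linarith
  rw [fourierIntegrand, fourierIntegrand, norm_mul, norm_mul, Complex.norm_real,
    Complex.norm_real, Real.norm_eq_abs, Real.norm_eq_abs, Real.abs_exp, Real.abs_exp]
  gcongr

lemma measureReal_pi_gaussianReal_preimage_add (v : NNReal) (a b y : ι → ℝ) :
    (Measure.pi fun _ => gaussianReal 0 v).real
        ((y + ·) ⁻¹' Set.univ.pi fun l => Set.Ioc (a l) (b l))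
      = ∏ l, (gaussianReal (y l) v).real (Set.Ioc (a l) (b l)) := by
  have hset : ((y + ·) ⁻¹' Set.univ.pi fun l => Set.Ioc (a l) (b l))
      = Set.univ.pi fun l => (y l + ·) ⁻¹' Set.Ioc (a l) (b l) := by
    ext x
    simp only [Set.mem_preimage, Set.mem_univ_pi, Pi.add_apply]
  rw [hset, Measure.real, Measure.pi_pi, ENNReal.toReal_prod]
  refine Finset.prod_congr rfl fun l _ => ?_
  rw [← Measure.real, ← map_measureReal_apply (by fun_prop) measurableSet_Ioc,
    gaussianReal_map_const_add, zero_add]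

variable [DecidableEq ι]

lemma integral_prod_mul_exp_quadratic {T : Matrix ι ι ℝ} (hT : T.PosSemidef) {f : ι → ℝ → ℂ}
    (hf : ∀ l, Integrable (f l)) :
    ∫ ξ : ι → ℝ, (∏ l, f l (ξ l)) * Real.exp (-(ξ ⬝ᵥ T *ᵥ ξ) / 2)
      = ∫ y, ∏ l, (∫ s : ℝ, f l s * Complex.exp ((s * y l : ℝ) * I)) ∂gaussianLaw T := by
  have hprod : ∀ y : ι → ℝ, ∏ l, (∫ s : ℝ, f l s * Complex.exp ((s * y l : ℝ) * I))
      = ∫ ξ : ι → ℝ, (∏ l, f l (ξ l)) * Complex.exp ((ξ ⬝ᵥ y : ℝ) * I) := fun y => by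
    rw [← integral_fintype_prod_volume_eq_prod]
    simp_rw [Finset.prod_mul_distrib, ← Complex.exp_sum, ← Finset.sum_mul, ← Complex.ofReal_sum]
    rfl
  have hint : Integrable (Function.uncurry fun y ξ : ι → ℝ =>
      (∏ l, f l (ξ l)) * Complex.exp ((ξ ⬝ᵥ y : ℝ) * I)) ((gaussianLaw T).prod volume) := by
    have hF : Integrable (fun z : (ι → ℝ) × (ι → ℝ) => ∏ l, f l (z.2 l))
        ((gaussianLaw T).prod volume) := (Integrable.fintype_prod hf).comp_snd _
    refine hF.mul_bdd (c := 1) (Continuous.aestronglyMeasurable (by fun_prop))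
      (.of_forall fun z => (Complex.norm_exp_ofReal_mul_I _).le)
  simp_rw [hprod]
  rw [integral_integral_swap hint]
  congr 1
  ext ξ
  rw [integral_const_mul, integral_cexp_dotProduct_gaussianLaw hT]
  push_cast
  rfl

lemma fourierIntegrand_add_smul_one (T : Matrix ι ι ℝ) (v : ℝ) (a b : ι → ℝ) (m : ι → ℕ)
    (ξ : ι → ℝ) :
    fourierIntegrand (T + v • 1) a b m ξ
      = (∏ l, ((ξ l * I) ^ m l * fourierIoc (a l) (b l) (ξ l) * heatMultiplier v (ξ l)))
        * Real.exp (-(ξ ⬝ᵥ T *ᵥ ξ) / 2) := by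
  have hheat : ∏ l, heatMultiplier v (ξ l) = Real.exp (-(v * (ξ ⬝ᵥ ξ)) / 2) := by
    simp_rw [heatMultiplier, ← Complex.exp_sum, ← Complex.ofReal_sum, Complex.ofReal_exp,
      dotProduct, Finset.sum_neg_distrib, ← Finset.sum_div, ← Finset.mul_sum, sq, neg_div]
  rw [Finset.prod_mul_distrib, hheat, fourierIntegrand, mul_assoc, ← Complex.ofReal_mul,
    ← Real.exp_add, add_comm (-(v * _) / 2), Matrix.add_mulVec, dotProduct_add,
    Matrix.smul_mulVec, Matrix.one_mulVec, dotProduct_smul, smul_eq_mul, ← add_div, ← neg_add]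

lemma integrable_fourierIntegrand (hv : v ≠ 0) (hP : (P - (v : ℝ) • 1).PosSemidef)
    (a b : ι → ℝ) (m : ι → ℕ) : Integrable (fourierIntegrand P a b m) := by
  have hv0 : (0 : ℝ) < v := NNReal.coe_pos.2 (pos_iff_ne_zero.2 hv)
  have hone : Integrable (fourierIntegrand ((v : ℝ) • 1) a b m) := by
    have h := fourierIntegrand_add_smul_one 0 v a b m
    simp only [zero_add, Matrix.zero_mulVec, dotProduct_zero, neg_zero, zero_div, Real.exp_zero,
      Complex.ofReal_one, mul_one] at h
    rw [funext h]
    exact Integrable.fintype_prod fun l => integrable_pow_mul_heatMultiplier hv0 (m l)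
      (continuous_fourierIoc (a l) (b l)) (norm_fourierIoc_le _ _)
  refine hone.mono (Continuous.aestronglyMeasurable ?_)
    (.of_forall (norm_fourierIntegrand_le hP a b m))
  unfold fourierIntegrand
  fun_prop

lemma integral_fourierIntegrand (hv : v ≠ 0) (hP : (P - (v : ℝ) • 1).PosSemidef)
    (a b : ι → ℝ) (m : ι → ℕ) :
    ∫ ξ, fourierIntegrand P a b m ξ = (2 * Real.pi) ^ Fintype.card ι *
      ∫ y, smoothedBoxDeriv v a b m y ∂gaussianLaw (P - (v : ℝ) • 1) := by
  have hpi : (2 * Real.pi : ℂ) ≠ 0 := by exact_mod_cast Real.two_pi_pos.ne'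
  have h := fourierIntegrand_add_smul_one (P - (v : ℝ) • 1) v a b m
  rw [sub_add_cancel] at h
  simp_rw [h, smoothedBoxDeriv, smoothedIndicatorDeriv, Finset.prod_mul_distrib, Finset.prod_const,
    Finset.card_univ, integral_const_mul, ← mul_assoc, ← mul_pow, mul_inv_cancel₀ hpi, one_pow,
    one_mul, ← Finset.prod_mul_distrib]
  exact integral_prod_mul_exp_quadratic hP fun l =>
    integrable_pow_mul_heatMultiplier (NNReal.coe_pos.2 (pos_iff_ne_zero.2 hv)) (m l)
      (continuous_fourierIoc (a l) (b l)) (norm_fourierIoc_le _ _)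

lemma measureReal_gaussianLaw_pi_Ioc (hv : v ≠ 0) (hP : (P - (v : ℝ) • 1).PosSemidef)
    (hab : ∀ l, a l ≤ b l) :
    (2 * Real.pi) ^ Fintype.card ι
        * ((gaussianLaw P).real (Set.univ.pi fun l => Set.Ioc (a l) (b l)) : ℂ)
      = ∫ ξ, fourierIntegrand P a b 0 ξ := by
  have hconv : gaussianLaw P
      = gaussianLaw (P - (v : ℝ) • 1) ∗ Measure.pi fun _ => gaussianReal 0 v := by
    have hone : ((v : ℝ) • (1 : Matrix ι ι ℝ)).PosSemidef := Matrix.PosSemidef.one.smul v.2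
    rw [← gaussianLaw_smul_one, gaussianLaw_conv_gaussianLaw hP hone, sub_add_cancel]
  have hR : MeasurableSet (Set.univ.pi fun l => Set.Ioc (a l) (b l)) :=
    .univ_pi fun _ => measurableSet_Ioc
  rw [integral_fourierIntegrand hv hP, hconv, measureReal_conv _ _ hR, ← integral_complex_ofReal]
  congr 2
  ext y
  rw [measureReal_pi_gaussianReal_preimage_add, smoothedBoxDeriv, Complex.ofReal_prod]
  exact Finset.prod_congr rfl fun l _ => (smoothedIndicatorDeriv_zero hv (hab l) (y l)).symm

end Interpolation

lemma posSemidef_segment_add_smul_sub {ι : Type*} [DecidableEq ι] {S S' : Matrix ι ι ℝ}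
    {v : ℝ} (hS : (S - v • 1).PosSemidef) (hS' : S'.PosSemidef) {δ t w : ℝ}
    (ht : t ∈ Set.Icc (0 : ℝ) 1) (hδ : 0 ≤ δ) (hw : w ≤ (1 - t + δ) * v) :
    (S + δ • S + t • (S' - S) - w • 1).PosSemidef := by
  have hdecomp : S + δ • S + t • (S' - S) - w • (1 : Matrix ι ι ℝ)
      = (1 - t + δ) • (S - v • 1) + t • S' + ((1 - t + δ) * v - w) • 1 := by
    module
  rw [hdecomp]
  exact ((hS.smul (add_nonneg (sub_nonneg.2 ht.2) hδ)).add (hS'.smul ht.1)).add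
    (Matrix.PosSemidef.one.smul (sub_nonneg.2 hw))

section Derivative

open Complex (I)
open scoped Matrix

variable {ι : Type*} [Fintype ι] {P : Matrix ι ι ℝ} {v : NNReal} {a b : ι → ℝ}

/-- The derivative of `fourierIntegrand P a b 0` with respect to `P`, in the direction `E`. -/
noncomputable def fourierIntegrandDeriv (P E : Matrix ι ι ℝ) (a b ξ : ι → ℝ) : ℂ :=
  (-(ξ ⬝ᵥ E *ᵥ ξ) / 2 : ℝ) * fourierIntegrand P a b 0 ξ

lemma continuous_fourierIntegrandDeriv_segment (P E : Matrix ι ι ℝ) (a b : ι → ℝ) :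
    Continuous (Function.uncurry fun t : ℝ => fourierIntegrandDeriv (P + t • E) E a b) := by
  simp only [Function.uncurry_def, fourierIntegrandDeriv, fourierIntegrand, Matrix.add_mulVec,
    Matrix.smul_mulVec]
  fun_prop

lemma hasDerivAt_fourierIntegrand (P E : Matrix ι ι ℝ) (a b ξ : ι → ℝ) (t : ℝ) :
    HasDerivAt (fun t : ℝ => fourierIntegrand (P + t • E) a b 0 ξ)
      (fourierIntegrandDeriv (P + t • E) E a b ξ) t := by
  have hquad : ∀ t : ℝ, -(ξ ⬝ᵥ (P + t • E) *ᵥ ξ) / 2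
      = -(ξ ⬝ᵥ P *ᵥ ξ) / 2 + t * (-(ξ ⬝ᵥ E *ᵥ ξ) / 2) := fun t => by
    rw [Matrix.add_mulVec, Matrix.smul_mulVec, dotProduct_add, dotProduct_smul, smul_eq_mul]
    ring
  have hexp : HasDerivAt (fun t : ℝ => Real.exp (-(ξ ⬝ᵥ (P + t • E) *ᵥ ξ) / 2))
      (Real.exp (-(ξ ⬝ᵥ (P + t • E) *ᵥ ξ) / 2) * (-(ξ ⬝ᵥ E *ᵥ ξ) / 2)) t := by
    simp_rw [hquad]
    simpa using (((hasDerivAt_id t).mul_const _).const_add _).exp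
  refine (hexp.ofReal_comp.const_mul _).congr_deriv ?_
  rw [fourierIntegrandDeriv, fourierIntegrand, Complex.ofReal_mul]
  ring

variable [DecidableEq ι]

lemma integrable_smoothedBoxDeriv (hv : v ≠ 0) {u : ℝ} (hu : 1 ≤ u)
    (hcard : Fintype.card ι ≤ Real.exp (u ^ 2)) (hab : ∀ l, a l ≤ b l) (ν : Measure (ι → ℝ))
    [IsFiniteMeasure ν] (j k : ι) :
    Integrable (smoothedBoxDeriv v a b (Pi.single j 1 + Pi.single k 1)) ν := by
  refine Integrable.of_bound (C := 2880 * u ^ 2 / v)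
    (stronglyMeasurable_smoothedBoxDeriv _ _ _ _).aestronglyMeasurable (.of_forall fun y => ?_)
  set f : ι → ι → ℝ := fun j k => ‖smoothedBoxDeriv v a b (Pi.single j 1 + Pi.single k 1) y‖
  have hf : ∀ j k, 0 ≤ f j k := fun j k => norm_nonneg _
  calc f j k ≤ ∑ k, f j k := Finset.single_le_sum (fun k _ => hf j k) (Finset.mem_univ k)
    _ ≤ ∑ j, ∑ k, f j k := Finset.single_le_sum (f := fun j => ∑ k, f j k)
        (fun j _ => Finset.sum_nonneg fun k _ => hf j k) (Finset.mem_univ j)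
    _ ≤ 2880 * u ^ 2 / v := sum_sum_norm_smoothedBoxDeriv_le hv hu hcard hab y

lemma prod_mul_I_pow_single (ξ : ι → ℝ) (j : ι) :
    ∏ l, ((ξ l : ℂ) * I) ^ (Pi.single j 1 : ι → ℕ) l = ξ j * I := by
  rw [Finset.prod_eq_single j (fun l _ hl => by rw [Pi.single_eq_of_ne hl, pow_zero])
    (fun h => absurd (Finset.mem_univ j) h), Pi.single_eq_same, pow_one]

lemma fourierIntegrand_single_add_single (P : Matrix ι ι ℝ) (a b ξ : ι → ℝ) (j k : ι) :
    fourierIntegrand P a b (Pi.single j 1 + Pi.single k 1) ξ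
      = -(ξ j * ξ k) * fourierIntegrand P a b 0 ξ := by
  simp only [fourierIntegrand, Finset.prod_mul_distrib, Pi.add_apply, pow_add,
    prod_mul_I_pow_single, Pi.zero_apply, pow_zero, one_mul]
  linear_combination (ξ j * ξ k * (∏ l, fourierIoc (a l) (b l) (ξ l))
    * Real.exp (-(ξ ⬝ᵥ P *ᵥ ξ) / 2)) * Complex.I_sq

lemma fourierIntegrandDeriv_eq_sum (P E : Matrix ι ι ℝ) (a b ξ : ι → ℝ) :
    fourierIntegrandDeriv P E a b ξ = ∑ j, ∑ k, ((E j k / 2 : ℝ) : ℂ)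
      * fourierIntegrand P a b (Pi.single j 1 + Pi.single k 1) ξ := by
  simp_rw [fourierIntegrandDeriv, fourierIntegrand_single_add_single, dotProduct, Matrix.mulVec,
    dotProduct, Finset.mul_sum, neg_div, Finset.sum_div, ← Finset.sum_neg_distrib,
    Complex.ofReal_sum, Finset.sum_mul]
  refine Finset.sum_congr rfl fun j _ => Finset.sum_congr rfl fun k _ => ?_
  push_cast
  ring

lemma integrable_fourierIntegrandDeriv (hv : v ≠ 0) (hP : (P - (v : ℝ) • 1).PosSemidef)
    (E : Matrix ι ι ℝ) (a b : ι → ℝ) : Integrable (fourierIntegrandDeriv P E a b) := by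
  simp_rw [funext (fourierIntegrandDeriv_eq_sum P E a b)]
  exact integrable_finsetSum _ fun j _ => integrable_finsetSum _ fun k _ =>
    (integrable_fourierIntegrand hv hP a b _).const_mul _

lemma integral_fourierIntegrandDeriv (hv : v ≠ 0) (hP : (P - (v : ℝ) • 1).PosSemidef)
    (E : Matrix ι ι ℝ) (a b : ι → ℝ) :
    ∫ ξ, fourierIntegrandDeriv P E a b ξ = ∑ j, ∑ k, ((E j k / 2 : ℝ) : ℂ)
      * ∫ ξ, fourierIntegrand P a b (Pi.single j 1 + Pi.single k 1) ξ := by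
  have hI := fun j k => (integrable_fourierIntegrand hv hP a b
    (Pi.single j 1 + Pi.single k 1)).const_mul ((E j k / 2 : ℝ) : ℂ)
  simp_rw [fourierIntegrandDeriv_eq_sum]
  rw [integral_finsetSum _ fun j _ => integrable_finsetSum _ fun k _ => hI j k]
  simp_rw [fun j => integral_finsetSum Finset.univ fun k _ => hI j k, integral_const_mul]

lemma norm_integral_fourierIntegrandDeriv_le (hv : v ≠ 0)
    (hP : (P - (v : ℝ) • 1).PosSemidef) {u : ℝ} (hu : 1 ≤ u)
    (hcard : Fintype.card ι ≤ Real.exp (u ^ 2)) (hab : ∀ l, a l ≤ b l) {E : Matrix ι ι ℝ} {D : ℝ}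
    (hD : 0 ≤ D) (hE : ∀ j k, |E j k| ≤ D) :
    ‖∫ ξ, fourierIntegrandDeriv P E a b ξ‖
      ≤ (2 * Real.pi) ^ Fintype.card ι * (1440 * u ^ 2 * D / v) := by
  set ν := gaussianLaw (P - (v : ℝ) • 1)
  set K : ι → ι → (ι → ℝ) → ℂ := fun j k => smoothedBoxDeriv v a b (Pi.single j 1 + Pi.single k 1)
  set c : ℝ := (2 * Real.pi) ^ Fintype.card ι
  have hint : ∀ j k, Integrable (fun y => ‖K j k y‖) ν := fun j k =>
    (integrable_smoothedBoxDeriv hv hu hcard hab ν j k).norm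
  have hterm : ∀ j k, ‖((E j k / 2 : ℝ) : ℂ)
      * ∫ ξ, fourierIntegrand P a b (Pi.single j 1 + Pi.single k 1) ξ‖
      ≤ D / 2 * c * ∫ y, ‖K j k y‖ ∂ν := fun j k => by
    rw [integral_fourierIntegrand hv hP, norm_mul, norm_mul, Complex.norm_real, Real.norm_eq_abs,
      abs_div, abs_two, norm_pow, norm_mul, Complex.norm_ofNat, Complex.norm_real,
      Real.norm_of_nonneg Real.pi_pos.le, ← mul_assoc]
    gcongr
    · exact hE j k
    · exact norm_integral_le_integral_norm _
  rw [integral_fourierIntegrandDeriv hv hP]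
  calc _ ≤ ∑ j, ∑ k, D / 2 * c * ∫ y, ‖K j k y‖ ∂ν :=
        norm_sum_le_of_le _ fun j _ => norm_sum_le_of_le _ fun k _ => hterm j k
    _ = D / 2 * c * ∫ y, ∑ j, ∑ k, ‖K j k y‖ ∂ν := by
        rw [integral_finsetSum _ fun j _ => integrable_finsetSum _ fun k _ => hint j k]
        simp_rw [fun j => integral_finsetSum Finset.univ fun k _ => hint j k, Finset.mul_sum]
    _ ≤ D / 2 * c * ∫ _, 2880 * u ^ 2 / v ∂ν := by
        gcongr
        · exact integrable_finsetSum _ fun j _ => integrable_finsetSum _ fun k _ => hint j k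
        · exact integrable_const _
        · exact sum_sum_norm_smoothedBoxDeriv_le hv hu hcard hab
    _ = c * (1440 * u ^ 2 * D / v) := by
        rw [integral_const, probReal_univ, one_smul]
        ring

lemma integrable_fourierIntegrandDeriv_segment (hv : v ≠ 0) {E : Matrix ι ι ℝ}
    (hP : ∀ t ∈ Set.Icc (0 : ℝ) 1, (P + t • E - (v : ℝ) • 1).PosSemidef) (a b : ι → ℝ) :
    Integrable (Function.uncurry fun t : ℝ => fourierIntegrandDeriv (P + t • E) E a b)
      ((volume.restrict (Set.uIoc 0 1)).prod volume) := by
  have hbound := (integrable_fourierIntegrandDeriv hv (P := (v : ℝ) • 1)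
    (by rw [sub_self]; exact Matrix.PosSemidef.zero) E a b).norm.comp_snd
    (volume.restrict (Set.Ioc (0 : ℝ) 1))
  rw [Set.uIoc_of_le zero_le_one]
  refine hbound.mono' (continuous_fourierIntegrandDeriv_segment P E a b).aestronglyMeasurable ?_
  have hmem : ∀ᵐ z ∂(volume.restrict (Set.Ioc (0 : ℝ) 1)).prod (volume : Measure (ι → ℝ)),
      z.1 ∈ Set.Ioc (0 : ℝ) 1 :=
    Measure.quasiMeasurePreserving_fst.ae (ae_restrict_mem measurableSet_Ioc)
  filter_upwards [hmem] with z hz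
  simp only [Function.uncurry_def, fourierIntegrandDeriv, norm_mul]
  gcongr
  exact norm_fourierIntegrand_le (hP z.1 (Set.Ioc_subset_Icc_self hz)) a b 0 z.2

lemma measureReal_gaussianLaw_pi_Ioc_sub (hv : v ≠ 0) {E : Matrix ι ι ℝ}
    (hP : ∀ t ∈ Set.Icc (0 : ℝ) 1, (P + t • E - (v : ℝ) • 1).PosSemidef) (hab : ∀ l, a l ≤ b l) :
    (2 * Real.pi) ^ Fintype.card ι
        * (((gaussianLaw (P + E)).real (Set.univ.pi fun l => Set.Ioc (a l) (b l))
          - (gaussianLaw P).real (Set.univ.pi fun l => Set.Ioc (a l) (b l)) : ℝ) : ℂ)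
      = ∫ t in (0 : ℝ)..1, ∫ ξ, fourierIntegrandDeriv (P + t • E) E a b ξ := by
  have h₀ := hP 0 (Set.left_mem_Icc.2 zero_le_one)
  have h₁ := hP 1 (Set.right_mem_Icc.2 zero_le_one)
  rw [zero_smul, add_zero] at h₀
  rw [one_smul] at h₁
  have hFTC : ∀ ξ, ∫ t in (0 : ℝ)..1, fourierIntegrandDeriv (P + t • E) E a b ξ
      = fourierIntegrand (P + E) a b 0 ξ - fourierIntegrand P a b 0 ξ := fun ξ => by
    have h := intervalIntegral.integral_eq_sub_of_hasDerivAt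
      (fun t _ => hasDerivAt_fourierIntegrand P E a b ξ t)
      (((continuous_fourierIntegrandDeriv_segment P E a b).comp
        (Continuous.prodMk_left ξ)).intervalIntegrable 0 1)
    rwa [one_smul, zero_smul, add_zero] at h
  rw [intervalIntegral_integral_swap (integrable_fourierIntegrandDeriv_segment hv hP a b)]
  simp_rw [hFTC]
  rw [integral_sub (integrable_fourierIntegrand hv h₁ a b 0)
    (integrable_fourierIntegrand hv h₀ a b 0), ← measureReal_gaussianLaw_pi_Ioc hv h₁ hab,
    ← measureReal_gaussianLaw_pi_Ioc hv h₀ hab, Complex.ofReal_sub, mul_sub]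

lemma integral_inv_one_sub_add {δ : ℝ} (hδ : 0 < δ) :
    ∫ t in (0 : ℝ)..1, (1 - t + δ)⁻¹ = Real.log ((1 + δ) / δ) := by
  calc ∫ t in (0 : ℝ)..1, (1 - t + δ)⁻¹ = ∫ t in (0 : ℝ)..1, (1 + δ - t)⁻¹ := by
        simp_rw [sub_add_eq_add_sub]
    _ = ∫ x in (1 + δ - 1)..(1 + δ - 0), x⁻¹ :=
        intervalIntegral.integral_comp_sub_left (fun x => x⁻¹) (1 + δ)
    _ = Real.log ((1 + δ) / δ) := by
        rw [add_sub_cancel_left, sub_zero, integral_inv_of_pos hδ (by positivity)]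

/-- Along the segment from `S + δ • S` to `S' + δ • S` the smallest eigenvalue is at least
`(1 - t + δ) * v`, whose inverse integrates to the logarithm. -/
lemma abs_measureReal_gaussianLaw_pi_Ioc_sub_le {S S' : Matrix ι ι ℝ} (hv : v ≠ 0)
    (hS : (S - (v : ℝ) • 1).PosSemidef) (hS' : S'.PosSemidef) {u : ℝ} (hu : 1 ≤ u)
    (hcard : Fintype.card ι ≤ Real.exp (u ^ 2)) (hab : ∀ l, a l ≤ b l) {D : ℝ} (hD : 0 ≤ D)
    (hSS' : ∀ j k, |S' j k - S j k| ≤ D) {δ : ℝ} (hδ : 0 < δ) :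
    |(gaussianLaw (S' + δ • S)).real (Set.univ.pi fun l => Set.Ioc (a l) (b l))
        - (gaussianLaw (S + δ • S)).real (Set.univ.pi fun l => Set.Ioc (a l) (b l))|
      ≤ 1440 * u ^ 2 * D / v * Real.log ((1 + δ) / δ) := by
  set c : ℝ := (2 * Real.pi) ^ Fintype.card ι
  have hseg : ∀ t ∈ Set.Icc (0 : ℝ) 1,
      (S + δ • S + t • (S' - S) - ((δ.toNNReal * v : NNReal) : ℝ) • 1).PosSemidef := fun t ht =>
    posSemidef_segment_add_smul_sub hS hS' ht hδ.le (by
      rw [NNReal.coe_mul, Real.coe_toNNReal _ hδ.le]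
      exact mul_le_mul_of_nonneg_right (le_add_of_nonneg_left (sub_nonneg.2 ht.2)) v.2)
  have hderiv : ∀ t ∈ Set.Ioc (0 : ℝ) 1,
      ‖∫ ξ, fourierIntegrandDeriv (S + δ • S + t • (S' - S)) (S' - S) a b ξ‖
        ≤ c * (1440 * u ^ 2 * D / v) * (1 - t + δ)⁻¹ := fun t ht => by
    have hpos : 0 < 1 - t + δ := by linarith [ht.2]
    have hcoe : (((1 - t + δ).toNNReal * v : NNReal) : ℝ) = (1 - t + δ) * v := by
      rw [NNReal.coe_mul, Real.coe_toNNReal _ hpos.le]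
    refine (norm_integral_fourierIntegrandDeriv_le
      (mul_ne_zero (Real.toNNReal_pos.2 hpos).ne' hv)
      (posSemidef_segment_add_smul_sub hS hS' (Set.Ioc_subset_Icc_self ht) hδ.le hcoe.le)
      hu hcard hab hD hSS').trans_eq ?_
    rw [hcoe, mul_comm (1 - t + δ), ← div_div, div_eq_mul_inv _ (1 - t + δ), ← mul_assoc]
  have hint : IntervalIntegrable (fun t => c * (1440 * u ^ 2 * D / v) * (1 - t + δ)⁻¹)
      volume 0 1 := by
    refine (ContinuousOn.inv₀ (by fun_prop) fun t ht => ?_).intervalIntegrable.const_mul _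
    rw [Set.uIcc_of_le zero_le_one] at ht
    linarith [ht.2]
  have hbound := intervalIntegral.norm_integral_le_of_norm_le zero_le_one
    (.of_forall hderiv) hint
  rw [← measureReal_gaussianLaw_pi_Ioc_sub (mul_ne_zero (Real.toNNReal_pos.2 hδ).ne' hv) hseg hab,
    intervalIntegral.integral_const_mul, integral_inv_one_sub_add hδ, norm_mul, Complex.norm_real,
    Real.norm_eq_abs, norm_pow, norm_mul, Complex.norm_ofNat, Complex.norm_real,
    Real.norm_of_nonneg Real.pi_pos.le, mul_assoc, add_right_comm, add_sub_cancel] at hbound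
  exact le_of_mul_le_mul_left hbound (by positivity)

end Derivative

section AntiConcentration

variable {ι : Type*}

/-- The regression residual `x - x j • S e_j` of the vector `x` on its `j`-th coordinate, which is
independent of that coordinate under the centred Gaussian law with covariance `S` if `S j j = 1`. -/
def residual (S : Matrix ι ι ℝ) (j : ι) (x : ι → ℝ) : ι → ℝ :=
  fun k => x k - S k j * x j

/-- The vectors whose `j`-th coordinate exceeds its threshold `b j + t`, and exceeds it so much that
every other coordinate passes its own threshold by no more than its regression on the `j`-th one. -/
def exceedanceCell (S : Matrix ι ι ℝ) (b : ι → ℝ) (t : ℝ) (j : ι) : Set (ι → ℝ) :=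
  {x | b j + t < x j ∧ residual S j x ≤ residual S j fun k => b k + t}

/-- The vectors whose largest excess `x k - b k` is attained at `k = j` and lies in `(0, ε]`. -/
def maximalCell (b : ι → ℝ) (ε : ℝ) (j : ι) : Set (ι → ℝ) :=
  {x | x j - b j ∈ Set.Ioc 0 ε ∧ ∀ k, x k - b k ≤ x j - b j}

lemma continuous_residual (S : Matrix ι ι ℝ) (j : ι) : Continuous (residual S j) :=
  continuous_pi fun k => by unfold residual; fun_prop

lemma disjoint_exceedanceCell {S : Matrix ι ι ℝ} {j k : ι} (hsymm : S j k = S k j)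
    (hlt : S j k < 1) (b : ι → ℝ) (t : ℝ) :
    Disjoint (exceedanceCell S b t j) (exceedanceCell S b t k) := by
  rw [Set.disjoint_left]
  rintro x ⟨hxj, hj⟩ ⟨hxk, hk⟩
  have hkj := hj k
  have hjk := hk j
  simp only [residual] at hkj hjk
  rw [← hsymm] at hkj
  nlinarith

lemma residual_le_residual_add_iff (S : Matrix ι ι ℝ) (b x : ι → ℝ) (j : ι) :
    (residual S j x ≤ residual S j fun k => b k + (x j - b j)) ↔ ∀ k, x k - b k ≤ x j - b j := by
  refine forall_congr' fun k => ?_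
  simp only [residual, add_sub_cancel, sub_le_sub_iff_right]
  rw [sub_le_iff_le_add']

lemma Iic_diff_Iic_subset_iUnion_maximalCell [Finite ι] (b : ι → ℝ) (ε : ℝ) :
    Set.Iic (fun k => b k + ε) \ Set.Iic b ⊆ ⋃ j, maximalCell b ε j := by
  rintro x ⟨hx, hb⟩
  obtain ⟨i, hi⟩ : ∃ i, b i < x i := by simpa [Pi.le_def] using hb
  have : Nonempty ι := ⟨i⟩
  obtain ⟨j, hj⟩ := Finite.exists_max fun k => x k - b k
  refine Set.mem_iUnion.2 ⟨j, ⟨(sub_pos.2 hi).trans_le (hj i), ?_⟩, hj⟩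
  exact sub_le_iff_le_add'.2 (hx j)

lemma measurableSet_exceedanceCell [Finite ι] (S : Matrix ι ι ℝ) (b : ι → ℝ) (t : ℝ) (j : ι) :
    MeasurableSet (exceedanceCell S b t j) :=
  (measurableSet_lt measurable_const (measurable_pi_apply j)).inter
    ((continuous_residual S j).measurable measurableSet_Iic)

variable [Fintype ι] [DecidableEq ι] {S : Matrix ι ι ℝ}

lemma memLp_eval_gaussianLaw (S : Matrix ι ι ℝ) (j : ι) :
    MemLp (fun x => x j) 2 (gaussianLaw S) :=
  (IsGaussian.hasGaussianLaw_id.map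
    (ContinuousLinearMap.proj (R := ℝ) (φ := fun _ : ι => ℝ) j)).memLp_two

lemma indepFun_eval_residual (hS : S.PosSemidef) {j : ι} (hj : S j j = 1) :
    IndepFun (fun x => x j) (residual S j) (gaussianLaw S) := by
  let L : (ι → ℝ) →L[ℝ] (Unit → ℝ) × (ι → ℝ) :=
    (ContinuousLinearMap.pi fun _ => ContinuousLinearMap.proj j).prod
      (ContinuousLinearMap.pi fun k => ContinuousLinearMap.proj k
        - S k j • ContinuousLinearMap.proj j)
  have hpair : HasGaussianLaw
      (fun x : ι → ℝ => (fun _ : Unit => x j, fun k => x k - S k j * x j)) (gaussianLaw S) :=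
    (IsGaussian.hasGaussianLaw_id (μ := gaussianLaw S)).map L
  have hcov : ∀ k, cov[fun x => x j, fun x => x k - S k j * x j; gaussianLaw S] = 0 := fun k => by
    rw [covariance_fun_sub_right (memLp_eval_gaussianLaw S j) (memLp_eval_gaussianLaw S k)
      ((memLp_eval_gaussianLaw S j).const_mul _), covariance_const_mul_right,
      covariance_eval_gaussianLaw hS, covariance_eval_gaussianLaw hS, hj, mul_one,
      show S j k = S k j from hS.isHermitian.apply k j, sub_self]
  exact (hpair.indepFun_of_covariance_eval fun _ => hcov).comp (measurable_pi_apply ())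
    measurable_id

lemma measureReal_exceedanceCell (hS : S.PosSemidef) {j : ι} (hj : S j j = 1) (b : ι → ℝ)
    (t : ℝ) :
    (gaussianLaw S).real (exceedanceCell S b t j)
      = (gaussianReal 0 1).real (Set.Ioi (b j + t))
        * (gaussianLaw S).real {x | residual S j x ≤ residual S j fun k => b k + t} := by
  have h := (indepFun_eval_residual hS hj).measure_inter_preimage_eq_mul _ _
    (measurableSet_Ioi (a := b j + t))
    (measurableSet_Iic (a := residual S j fun k => b k + t))
  have hmap := gaussianLaw_map_eval hS j
  rw [hj, Real.toNNReal_one] at hmap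
  rw [← hmap, map_measureReal_apply (measurable_pi_apply j) measurableSet_Ioi,
    Measure.real, Measure.real, Measure.real, ← ENNReal.toReal_mul]
  exact congrArg ENNReal.toReal h

/-- The density at `t` of the excess `x j - b j` on the event that it is the largest of all excesses
`x k - b k`, under the Gaussian law with covariance `S`. -/
noncomputable def maximalExcessDensity (S : Matrix ι ι ℝ) (b : ι → ℝ) (j : ι) (t : ℝ) : ℝ :=
  gaussianPDFReal 0 1 (b j + t)
    * (gaussianLaw S).real {x | residual S j x ≤ residual S j fun k => b k + t}

lemma integrable_maximalExcessDensity (S : Matrix ι ι ℝ) (b : ι → ℝ) (j : ι) :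
    Integrable (maximalExcessDensity S b j) := by
  have hmeas : Measurable fun t =>
      (gaussianLaw S).real {x | residual S j x ≤ residual S j fun k => b k + t} := by
    refine (measurable_measure_prodMk_left (s := {z : ℝ × (ι → ℝ) |
      residual S j z.2 ≤ residual S j fun k => b k + z.1}) ?_).ennreal_toReal
    exact (isClosed_le ((continuous_residual S j).comp continuous_snd)
      ((continuous_residual S j).comp (by fun_prop))).measurableSet
  exact ((integrable_gaussianPDFReal 0 1).comp_add_left (b j)).mul_bdd (c := 1)
    hmeas.aestronglyMeasurable
    (.of_forall fun t => (Real.norm_of_nonneg measureReal_nonneg).trans_le measureReal_le_one)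

lemma sum_maximalExcessDensity_le (hS : S.PosSemidef) (hdiag : ∀ j, S j j = 1)
    (hoff : ∀ j k, j ≠ k → S j k < 1) {u : ℝ} (hu : 1 ≤ u)
    (hcard : Fintype.card ι ≤ Real.exp (u ^ 2)) (b : ι → ℝ) (t : ℝ) :
    ∑ j, maximalExcessDensity S b j t ≤ 30 * u := by
  have hterm : ∀ j, maximalExcessDensity S b j t
      ≤ 15 * u * ((gaussianLaw S).real (exceedanceCell S b t j) + Real.exp (-u ^ 2)) := fun j => by
    set p := (gaussianLaw S).real {x | residual S j x ≤ residual S j fun k => b k + t}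
    calc maximalExcessDensity S b j t
        ≤ 15 * u * ((gaussianReal 0 1).real (Set.Ioi (b j + t)) + Real.exp (-u ^ 2)) * p := by
          exact mul_le_mul_of_nonneg_right (gaussianPDFReal_le_measureReal_Ioi_add_exp hu _)
            measureReal_nonneg
      _ = 15 * u * ((gaussianReal 0 1).real (Set.Ioi (b j + t)) * p + Real.exp (-u ^ 2) * p) := by
          ring
      _ ≤ 15 * u * ((gaussianLaw S).real (exceedanceCell S b t j) + Real.exp (-u ^ 2)) := by
          rw [measureReal_exceedanceCell hS (hdiag j)]
          gcongr
          exact mul_le_of_le_one_right (Real.exp_pos _).le measureReal_le_one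
  have hdisj : Pairwise (Function.onFun Disjoint (exceedanceCell S b t)) := fun j k hjk =>
    disjoint_exceedanceCell (hS.isHermitian.apply k j) (hoff j k hjk) b t
  have hcells : ∑ j, (gaussianLaw S).real (exceedanceCell S b t j) ≤ 1 := by
    rw [← measureReal_iUnion_fintype hdisj (measurableSet_exceedanceCell S b t)]
    exact measureReal_le_one
  have hexp : Fintype.card ι * Real.exp (-u ^ 2) ≤ 1 := by
    rwa [Real.exp_neg, ← div_eq_mul_inv, div_le_one (Real.exp_pos _)]
  calc ∑ j, maximalExcessDensity S b j t
      ≤ ∑ j, 15 * u * ((gaussianLaw S).real (exceedanceCell S b t j) + Real.exp (-u ^ 2)) :=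
        Finset.sum_le_sum fun j _ => hterm j
    _ = 15 * u * (∑ j, (gaussianLaw S).real (exceedanceCell S b t j)
          + Fintype.card ι * Real.exp (-u ^ 2)) := by
        rw [← Finset.mul_sum, Finset.sum_add_distrib, Finset.sum_const, Finset.card_univ,
          nsmul_eq_mul]
    _ ≤ 15 * u * (1 + 1) := by gcongr
    _ = 30 * u := by ring

lemma measureReal_maximalCell (hS : S.PosSemidef) {j : ι} (hj : S j j = 1) (b : ι → ℝ) (ε : ℝ) :
    (gaussianLaw S).real (maximalCell b ε j)
      = ∫ t in Set.Ioc 0 ε, maximalExcessDensity S b j t := by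
  set ρ := (gaussianLaw S).map (residual S j)
  set B : Set (ℝ × (ι → ℝ)) := {z | z.1 - b j ∈ Set.Ioc 0 ε
    ∧ z.2 ≤ residual S j fun k => b k + (z.1 - b j)}
  have hB : MeasurableSet B :=
    ((measurable_fst.sub_const (b j)) measurableSet_Ioc).inter
      (isClosed_le continuous_snd ((continuous_residual S j).comp (by fun_prop))).measurableSet
  have hres : Measurable (residual S j) := (continuous_residual S j).measurable
  have hprod : (gaussianLaw S).map (fun x => (x j, residual S j x))
      = (gaussianReal 0 1).prod ρ := by
    rw [(indepFun_iff_map_prod_eq_prod_map_map (measurable_pi_apply j).aemeasurable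
      hres.aemeasurable).1
      (indepFun_eval_residual hS hj), gaussianLaw_map_eval hS, hj, Real.toNNReal_one]
  have hfibre : ∀ t, gaussianPDFReal 0 1 (b j + t) * ρ.real (Prod.mk (b j + t) ⁻¹' B)
      = (Set.Ioc 0 ε).indicator (maximalExcessDensity S b j) t := fun t => by
    by_cases ht : t ∈ Set.Ioc 0 ε
    · simp only [Set.indicator_of_mem ht, B, Set.preimage_ofPred_eq, add_sub_cancel_left, ht,
        true_and, maximalExcessDensity]
      exact congrArg (_ * ·) (map_measureReal_apply hres measurableSet_Iic)
    · simp only [Set.indicator_of_notMem ht, B, Set.preimage_ofPred_eq, add_sub_cancel_left, ht,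
        false_and, Set.ofPred_false, measureReal_empty, mul_zero]
  calc (gaussianLaw S).real (maximalCell b ε j)
      = ((gaussianReal 0 1).prod ρ).real B := by
        rw [← hprod, map_measureReal_apply (by fun_prop) hB]
        congr 1
        ext x
        exact and_congr_right fun _ => (residual_le_residual_add_iff S b x j).symm
    _ = ∫ s, gaussianPDFReal 0 1 s * ρ.real (Prod.mk s ⁻¹' B) := by
        rw [measureReal_prod_apply hB, integral_gaussianReal_eq_integral_smul one_ne_zero]
        rfl
    _ = ∫ t, gaussianPDFReal 0 1 (b j + t) * ρ.real (Prod.mk (b j + t) ⁻¹' B) :=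
        (integral_add_left_eq_self _ (b j)).symm
    _ = ∫ t in Set.Ioc 0 ε, maximalExcessDensity S b j t := by
        simp_rw [hfibre]
        exact integral_indicator measurableSet_Ioc

/-- **Nazarov's inequality**: the density of the maximal excess is at most `30 * u`. -/
lemma measureReal_gaussianLaw_Iic_diff_Iic_le (hS : S.PosSemidef) (hdiag : ∀ j, S j j = 1)
    (hoff : ∀ j k, j ≠ k → S j k < 1) {u : ℝ} (hu : 1 ≤ u)
    (hcard : Fintype.card ι ≤ Real.exp (u ^ 2)) (b : ι → ℝ) {ε : ℝ} (hε : 0 ≤ ε) :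
    (gaussianLaw S).real (Set.Iic (fun k => b k + ε) \ Set.Iic b) ≤ 30 * u * ε := by
  have hint := fun j => (integrable_maximalExcessDensity S b j).integrableOn (s := Set.Ioc 0 ε)
  calc (gaussianLaw S).real (Set.Iic (fun k => b k + ε) \ Set.Iic b)
      ≤ (gaussianLaw S).real (⋃ j, maximalCell b ε j) :=
        measureReal_mono (Iic_diff_Iic_subset_iUnion_maximalCell b ε)
    _ ≤ ∑ j, (gaussianLaw S).real (maximalCell b ε j) := measureReal_iUnion_fintype_le _
    _ = ∫ t in Set.Ioc 0 ε, ∑ j, maximalExcessDensity S b j t := by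
        rw [integral_finsetSum _ fun j _ => hint j]
        exact Finset.sum_congr rfl fun j _ => measureReal_maximalCell hS (hdiag j) b ε
    _ ≤ ∫ _ in Set.Ioc 0 ε, 30 * u :=
        setIntegral_mono (integrable_finsetSum _ fun j _ => hint j) (integrable_const _)
          fun t => sum_maximalExcessDensity_le hS hdiag hoff hu hcard b t
    _ = 30 * u * ε := by
        rw [setIntegral_const, Real.volume_real_Ioc_of_le hε, sub_zero, smul_eq_mul, mul_comm]

end AntiConcentration

section Boxes

variable {ι : Type*}

/-- The half-open rectangle with corners `a` and `b`, enlarged by `r` on every side; a negative `r`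
shrinks it, possibly to the empty set. -/
def enlargedBox (a b : ι → ℝ) (r : ℝ) : Set (ι → ℝ) :=
  Set.univ.pi fun l => Set.Ioc (a l - r) (b l + r)

lemma measurableSet_enlargedBox [Countable ι] (a b : ι → ℝ) (r : ℝ) :
    MeasurableSet (enlargedBox a b r) :=
  MeasurableSet.univ_pi fun _ => measurableSet_Ioc

lemma enlargedBox_add_subset (a b : ι → ℝ) (r : ℝ) {ε : ℝ} (hε : 0 < ε) :
    enlargedBox a b (r + ε) ⊆ enlargedBox a b r
      ∪ ((Set.Iic (fun l => b l + r + ε) \ Set.Iic fun l => b l + r)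
        ∪ (-·) ⁻¹' (Set.Iic (fun l => -(a l - r) - ε + 2 * ε)
          \ Set.Iic fun l => -(a l - r) - ε)) := by
  intro x hx
  by_cases hupper : ∃ l, b l + r < x l
  · obtain ⟨l, hl⟩ := hupper
    refine .inr (.inl ⟨fun k => ?_, fun hx' => (hx' l).not_gt hl⟩)
    linarith [(hx k trivial).2]
  by_cases hlower : ∃ l, x l ≤ a l - r
  · obtain ⟨l, hl⟩ := hlower
    refine .inr (.inr ⟨fun k => ?_, fun hx' => ?_⟩)
    · change -x k ≤ -(a k - r) - ε + 2 * ε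
      linarith [(hx k trivial).1]
    · have hxl : -x l ≤ -(a l - r) - ε := hx' l
      linarith
  · push Not at hupper hlower
    exact .inl fun k _ => ⟨hlower k, hupper k⟩

variable [Fintype ι]

lemma add_mem_enlargedBox {a b x y : ι → ℝ} {r ε : ℝ} (hx : x ∈ enlargedBox a b r)
    (hy : ‖y‖ ≤ ε) : x + y ∈ enlargedBox a b (r + ε) := fun l _ => by
  have hxl := hx l trivial
  have hyl := abs_le.1 ((norm_le_pi_norm y l).trans hy)
  constructor <;> rw [Pi.add_apply] <;> linarith [hxl.1, hxl.2, hyl.1, hyl.2]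

lemma mem_enlargedBox_of_add_mem {a b x y : ι → ℝ} {r ε : ℝ} (hxy : x + y ∈ enlargedBox a b r)
    (hy : ‖y‖ ≤ ε) : x ∈ enlargedBox a b (r + ε) := by
  simpa using add_mem_enlargedBox hxy ((norm_neg y).trans_le hy)

variable (ν ρ : Measure (ι → ℝ)) [IsProbabilityMeasure ν] [IsProbabilityMeasure ρ]

lemma measureReal_conv_enlargedBox_le (a b : ι → ℝ) (r ε : ℝ) :
    (ν ∗ ρ).real (enlargedBox a b r)
      ≤ ν.real (enlargedBox a b (r + ε)) + ρ.real {y | ε < ‖y‖} := by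
  have hsub : (fun z : (ι → ℝ) × (ι → ℝ) => z.1 + z.2) ⁻¹' enlargedBox a b r
      ⊆ enlargedBox a b (r + ε) ×ˢ Set.univ ∪ Set.univ ×ˢ {y | ε < ‖y‖} := fun z hz =>
    (le_or_gt ‖z.2‖ ε).imp (fun hy => ⟨mem_enlargedBox_of_add_mem hz hy, trivial⟩)
      fun hy => ⟨trivial, hy⟩
  calc (ν ∗ ρ).real (enlargedBox a b r)
      ≤ (ν.prod ρ).real (enlargedBox a b (r + ε) ×ˢ Set.univ ∪ Set.univ ×ˢ {y | ε < ‖y‖}) := by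
        rw [Measure.conv, map_measureReal_apply measurable_add (measurableSet_enlargedBox a b r)]
        exact measureReal_mono hsub
    _ ≤ (ν.prod ρ).real (enlargedBox a b (r + ε) ×ˢ Set.univ)
        + (ν.prod ρ).real (Set.univ ×ˢ {y | ε < ‖y‖}) := measureReal_union_le _ _
    _ = ν.real (enlargedBox a b (r + ε)) + ρ.real {y | ε < ‖y‖} := by
        rw [measureReal_prod_prod, measureReal_prod_prod, probReal_univ, probReal_univ, mul_one,
          one_mul]

lemma measureReal_enlargedBox_le_conv (a b : ι → ℝ) (r ε : ℝ) :
    ν.real (enlargedBox a b r)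
      ≤ (ν ∗ ρ).real (enlargedBox a b (r + ε)) + ρ.real {y | ε < ‖y‖} := by
  have hsub : enlargedBox a b r ×ˢ Set.univ
      ⊆ (fun z : (ι → ℝ) × (ι → ℝ) => z.1 + z.2) ⁻¹' enlargedBox a b (r + ε)
        ∪ Set.univ ×ˢ {y | ε < ‖y‖} := fun z hz =>
    (le_or_gt ‖z.2‖ ε).imp (fun hy => add_mem_enlargedBox hz.1 hy) fun hy => ⟨trivial, hy⟩
  calc ν.real (enlargedBox a b r)
      = (ν.prod ρ).real (enlargedBox a b r ×ˢ Set.univ) := by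
        rw [measureReal_prod_prod, probReal_univ, mul_one]
    _ ≤ (ν.prod ρ).real ((fun z => z.1 + z.2) ⁻¹' enlargedBox a b (r + ε))
        + (ν.prod ρ).real (Set.univ ×ˢ {y | ε < ‖y‖}) :=
        (measureReal_mono hsub).trans (measureReal_union_le _ _)
    _ = (ν ∗ ρ).real (enlargedBox a b (r + ε)) + ρ.real {y | ε < ‖y‖} := by
        rw [measureReal_prod_prod, probReal_univ, one_mul, Measure.conv,
          map_measureReal_apply measurable_add (measurableSet_enlargedBox a b _)]

end Boxes

section Tail

lemma measureReal_gaussianReal_lt_abs_le (v : NNReal) {ε : ℝ} (hε : 0 ≤ ε) :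
    (gaussianReal 0 v).real {x | ε < |x|} ≤ 2 * Real.exp (-ε ^ 2 / (2 * v)) := by
  have hsubG : HasSubgaussianMGF id v (gaussianReal 0 v) :=
    ⟨integrable_exp_mul_gaussianReal, fun t => by simp [mgf_id_gaussianReal]⟩
  have hsub : {x : ℝ | ε < |x|} ⊆ {x | ε ≤ id x} ∪ {x | ε ≤ -id x} := fun x hx =>
    (lt_abs.1 hx).imp (fun h : ε < x => h.le) fun h : ε < -x => h.le
  calc (gaussianReal 0 v).real {x | ε < |x|}
      ≤ (gaussianReal 0 v).real {x | ε ≤ id x} + (gaussianReal 0 v).real {x | ε ≤ -id x} :=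
        (measureReal_mono hsub).trans (measureReal_union_le _ _)
    _ ≤ Real.exp (-ε ^ 2 / (2 * v)) + Real.exp (-ε ^ 2 / (2 * v)) :=
        add_le_add (hsubG.measure_ge_le hε) (hsubG.neg.measure_ge_le hε)
    _ = 2 * Real.exp (-ε ^ 2 / (2 * v)) := (two_mul _).symm

lemma measureReal_gaussianLaw_lt_norm_le {ι : Type*} [Fintype ι] [DecidableEq ι]
    {S : Matrix ι ι ℝ} (hS : S.PosSemidef) {v : NNReal} (hdiag : ∀ j, S j j = v) {ε : ℝ}
    (hε : 0 ≤ ε) :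
    (gaussianLaw S).real {w | ε < ‖w‖}
      ≤ Fintype.card ι * (2 * Real.exp (-ε ^ 2 / (2 * v))) := by
  have hunion : {w : ι → ℝ | ε < ‖w‖} = ⋃ j, (fun w => w j) ⁻¹' {x | ε < |x|} := by
    ext w
    rw [Set.mem_ofPred_eq, ← not_le, pi_norm_le_iff_of_nonneg hε]
    simp
  have hmeas : MeasurableSet {x : ℝ | ε < |x|} := measurableSet_lt measurable_const measurable_norm
  have hterm : ∀ j, (gaussianLaw S).real ((fun w => w j) ⁻¹' {x | ε < |x|})
      ≤ 2 * Real.exp (-ε ^ 2 / (2 * v)) := fun j => by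
    rw [← map_measureReal_apply (measurable_pi_apply j) hmeas, gaussianLaw_map_eval hS, hdiag,
      Real.toNNReal_coe]
    exact measureReal_gaussianReal_lt_abs_le v hε
  rw [hunion]
  refine (measureReal_iUnion_fintype_le _).trans
    ((Finset.sum_le_sum fun j _ => hterm j).trans_eq ?_)
  rw [Finset.sum_const, Finset.card_univ, nsmul_eq_mul]

end Tail

section Shell

variable {ι : Type*} [Fintype ι] [DecidableEq ι]

lemma measureReal_gaussianLaw_enlargedBox_add_le {S : Matrix ι ι ℝ} (hS : S.PosSemidef)
    (hdiag : ∀ j, S j j = 1) (hoff : ∀ j k, j ≠ k → S j k < 1) {u : ℝ} (hu : 1 ≤ u)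
    (hcard : Fintype.card ι ≤ Real.exp (u ^ 2)) (a b : ι → ℝ) (r : ℝ) {ε : ℝ} (hε : 0 < ε) :
    (gaussianLaw S).real (enlargedBox a b (r + ε))
      ≤ (gaussianLaw S).real (enlargedBox a b r) + 90 * u * ε := by
  set upper := Set.Iic (fun l => b l + r + ε) \ Set.Iic fun l => b l + r
  set lower := Set.Iic (fun l => -(a l - r) - ε + 2 * ε) \ Set.Iic fun l => -(a l - r) - ε
  have hupper_le : (gaussianLaw S).real upper ≤ 30 * u * ε :=
    measureReal_gaussianLaw_Iic_diff_Iic_le hS hdiag hoff hu hcard _ hε.le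
  have hlower_le : (gaussianLaw S).real ((-·) ⁻¹' lower) ≤ 30 * u * (2 * ε) := by
    rw [← map_measureReal_apply measurable_neg (measurableSet_Iic.diff measurableSet_Iic),
      gaussianLaw_map_neg hS]
    exact measureReal_gaussianLaw_Iic_diff_Iic_le hS hdiag hoff hu hcard _ (by positivity)
  calc (gaussianLaw S).real (enlargedBox a b (r + ε))
      ≤ (gaussianLaw S).real (enlargedBox a b r ∪ (upper ∪ (-·) ⁻¹' lower)) :=
        measureReal_mono (enlargedBox_add_subset a b r hε)
    _ ≤ (gaussianLaw S).real (enlargedBox a b r)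
        + ((gaussianLaw S).real upper + (gaussianLaw S).real ((-·) ⁻¹' lower)) :=
        (measureReal_union_le _ _).trans (add_le_add_right (measureReal_union_le _ _) _)
    _ ≤ (gaussianLaw S).real (enlargedBox a b r) + 90 * u * ε := by linarith

end Shell

section Smoothing

variable {ι : Type*} [Fintype ι]

lemma abs_measureReal_enlargedBox_sub_le_of_conv (ν ν' ρ : Measure (ι → ℝ))
    [IsProbabilityMeasure ν] [IsProbabilityMeasure ν'] [IsProbabilityMeasure ρ] {a b : ι → ℝ}
    {ε M N : ℝ}
    (hconv : ∀ r, |(ν' ∗ ρ).real (enlargedBox a b r) - (ν ∗ ρ).real (enlargedBox a b r)| ≤ M)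
    (hshell : ∀ r, ν.real (enlargedBox a b (r + 2 * ε)) ≤ ν.real (enlargedBox a b r) + N)
    (r : ℝ) :
    |ν'.real (enlargedBox a b r) - ν.real (enlargedBox a b r)|
      ≤ M + 2 * ρ.real {y | ε < ‖y‖} + N := by
  set η := ρ.real {y | ε < ‖y‖}
  have hupper : ν'.real (enlargedBox a b r) ≤ ν.real (enlargedBox a b r) + (M + 2 * η + N) := by
    calc ν'.real (enlargedBox a b r)
        ≤ (ν' ∗ ρ).real (enlargedBox a b (r + ε)) + η :=
          measureReal_enlargedBox_le_conv ν' ρ a b r ε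
      _ ≤ (ν ∗ ρ).real (enlargedBox a b (r + ε)) + M + η := by
          linarith [(abs_le.1 (hconv (r + ε))).2]
      _ ≤ ν.real (enlargedBox a b (r + 2 * ε)) + η + M + η := by
          have h := measureReal_conv_enlargedBox_le ν ρ a b (r + ε) ε
          rw [add_assoc r, ← two_mul] at h
          linarith
      _ ≤ ν.real (enlargedBox a b r) + (M + 2 * η + N) := by linarith [hshell r]
  have hlower : ν.real (enlargedBox a b r) ≤ ν'.real (enlargedBox a b r) + (M + 2 * η + N) := by
    calc ν.real (enlargedBox a b r)
        ≤ ν.real (enlargedBox a b (r - 2 * ε)) + N := by simpa using hshell (r - 2 * ε)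
      _ ≤ (ν ∗ ρ).real (enlargedBox a b (r - ε)) + η + N := by
          have h := measureReal_enlargedBox_le_conv ν ρ a b (r - 2 * ε) ε
          rw [show r - 2 * ε + ε = r - ε by ring] at h
          linarith
      _ ≤ (ν' ∗ ρ).real (enlargedBox a b (r - ε)) + M + η + N := by
          linarith [(abs_le.1 (hconv (r - ε))).1]
      _ ≤ ν'.real (enlargedBox a b r) + η + M + η + N := by
          have h := measureReal_conv_enlargedBox_le ν' ρ a b (r - ε) ε
          rw [sub_add_cancel] at h
          linarith
      _ = ν'.real (enlargedBox a b r) + (M + 2 * η + N) := by ring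
  exact abs_sub_le_iff.2 ⟨by linarith, by linarith⟩

end Smoothing

section Comparison

open scoped Matrix

lemma two_mul_apply_lt_of_posDef {ι : Type*} [Finite ι] {S : Matrix ι ι ℝ} (hS : S.PosDef)
    {j k : ι} (hjk : j ≠ k) :
    2 * S j k < S j j + S k k := by
  classical
  have := Fintype.ofFinite ι
  have hne : (Pi.single j 1 - Pi.single k 1 : ι → ℝ) ≠ 0 := fun h => by
    simpa [hjk] using congrFun h j
  have hpos := hS.dotProduct_mulVec_pos hne
  have hsymm : S k j = S j k := hS.isHermitian.apply j k
  simp only [star_trivial, Matrix.mulVec_sub, Matrix.mulVec_single_one, sub_dotProduct,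
    dotProduct_sub, single_one_dotProduct, Matrix.col_apply] at hpos
  linarith

variable {ι : Type*} [DecidableEq ι] {S S' : Matrix ι ι ℝ} {v : NNReal} {u D δ : ℝ}

lemma posDef_of_posSemidef_sub_smul_one (hv : v ≠ 0) (hS : (S - (v : ℝ) • 1).PosSemidef) :
    S.PosDef := by
  simpa using
    (Matrix.PosDef.one.smul (NNReal.coe_pos.2 (pos_iff_ne_zero.2 hv))).add_posSemidef hS

variable [Fintype ι]

lemma abs_measureReal_gaussianLaw_add_smul_enlargedBox_sub_le (hv : v ≠ 0)
    (hS : (S - (v : ℝ) • 1).PosSemidef) (hS' : S'.PosSemidef) (hu : 1 ≤ u)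
    (hcard : Fintype.card ι ≤ Real.exp (u ^ 2)) (hD : 0 ≤ D)
    (hSS' : ∀ j k, |S' j k - S j k| ≤ D) (hδ : 0 < δ) (a b : ι → ℝ) (r : ℝ) :
    |(gaussianLaw (S' + δ • S)).real (enlargedBox a b r)
        - (gaussianLaw (S + δ • S)).real (enlargedBox a b r)|
      ≤ 1440 * u ^ 2 * D / v * Real.log ((1 + δ) / δ) := by
  by_cases hab : ∀ l, a l - r ≤ b l + r
  · exact abs_measureReal_gaussianLaw_pi_Ioc_sub_le hv hS hS' hu hcard hab hD hSS' hδ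
  · have hempty : enlargedBox a b r = ∅ := by
      push Not at hab
      obtain ⟨l, hl⟩ := hab
      exact Set.univ_pi_eq_empty (Set.Ioc_eq_empty_of_le hl.le)
    have hlog : 0 ≤ Real.log ((1 + δ) / δ) := Real.log_nonneg ((one_le_div hδ).2 (by linarith))
    rw [hempty, measureReal_empty, measureReal_empty, sub_zero, abs_zero]
    positivity

lemma abs_measureReal_gaussianLaw_enlargedBox_sub_le_of_smoothing (hv : v ≠ 0)
    (hS : (S - (v : ℝ) • 1).PosSemidef) (hdiag : ∀ j, S j j = 1) (hS' : S'.PosSemidef)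
    (hu : 1 ≤ u) (hcard : Fintype.card ι ≤ Real.exp (u ^ 2)) (hD : 0 ≤ D)
    (hSS' : ∀ j k, |S' j k - S j k| ≤ D) (hδ : 0 < δ) {ε : ℝ} (hε : 0 < ε) (a b : ι → ℝ) (r : ℝ) :
    |(gaussianLaw S').real (enlargedBox a b r) - (gaussianLaw S).real (enlargedBox a b r)|
      ≤ 1440 * u ^ 2 * D / v * Real.log ((1 + δ) / δ)
        + 2 * (Fintype.card ι * (2 * Real.exp (-ε ^ 2 / (2 * δ)))) + 90 * u * (2 * ε) := by
  have hpd := posDef_of_posSemidef_sub_smul_one hv hS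
  have hδS : (δ • S).PosSemidef := hpd.posSemidef.smul hδ.le
  have hoff : ∀ j k, j ≠ k → S j k < 1 := fun j k hjk => by
    linarith [two_mul_apply_lt_of_posDef hpd hjk, hdiag j, hdiag k]
  have htail : (gaussianLaw (δ • S)).real {y | ε < ‖y‖}
      ≤ Fintype.card ι * (2 * Real.exp (-ε ^ 2 / (2 * δ))) := by
    lift δ to NNReal using hδ.le
    exact measureReal_gaussianLaw_lt_norm_le hδS (fun j => by simp [hdiag]) hε.le
  have hconv := abs_measureReal_enlargedBox_sub_le_of_conv (gaussianLaw S) (gaussianLaw S')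
    (gaussianLaw (δ • S)) (a := a) (b := b) (ε := ε)
    (fun r => by
      rw [gaussianLaw_conv_gaussianLaw hS' hδS, gaussianLaw_conv_gaussianLaw hpd.posSemidef hδS]
      exact abs_measureReal_gaussianLaw_add_smul_enlargedBox_sub_le hv hS hS' hu hcard hD hSS' hδ
        a b r)
    (fun r => measureReal_gaussianLaw_enlargedBox_add_le hpd.posSemidef hdiag hoff hu hcard a b r
      (by positivity)) r
  linarith

end Comparison

section Optimization

variable {r L : ℝ}

lemma log_one_add_pow_six_div_le (hr : 0 < r) (hr1 : r ≤ 1) :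
    Real.log ((1 + r ^ 6) / r ^ 6) ≤ 7 * max 1 |Real.log r| := by
  have hlog : Real.log (1 + r ^ 6) ≤ 1 :=
    (Real.log_le_sub_one_of_pos (by positivity)).trans
      ((add_sub_cancel_left 1 (r ^ 6)).trans_le (pow_le_one₀ hr.le hr1))
  calc Real.log ((1 + r ^ 6) / r ^ 6) = Real.log (1 + r ^ 6) + 6 * -Real.log r := by
        rw [Real.log_div (by positivity) (by positivity), Real.log_pow]
        push_cast
        ring
    _ ≤ max 1 |Real.log r| + 6 * max 1 |Real.log r| := by
        gcongr
        · exact hlog.trans (le_max_left _ _)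
        · exact (neg_le_abs _).trans (le_max_right _ _)
    _ = 7 * max 1 |Real.log r| := by ring

lemma exp_mul_exp_neg_sq_div_le (hr : 0 < r) (hr4 : 4 * r ≤ 1) (hrL : r * L ≤ 1) :
    Real.exp L * Real.exp (-(r ^ 2) ^ 2 / (2 * r ^ 6)) ≤ r := by
  have hL : L ≤ r⁻¹ := by rwa [← one_div, le_div_iff₀' hr]
  have hr' : 4 ≤ r⁻¹ := by rwa [← one_div, le_div_iff₀ hr]
  have hlog : -Real.log r ≤ r⁻¹ - 1 := by
    rw [← Real.log_inv]
    exact Real.log_le_sub_one_of_pos (inv_pos.2 hr)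
  have hquot : -(r ^ 2) ^ 2 / (2 * r ^ 6) = -(r⁻¹ ^ 2 / 2) := by field_simp
  rw [← Real.exp_add, ← Real.le_log_iff_exp_le hr, hquot]
  nlinarith

lemma smoothing_bound_le (hr : 0 < r) (hL : 1 ≤ L) (hrL : r * L ≤ 1 / 16) :
    1440 * √L ^ 2 * r * Real.log ((1 + r ^ 6) / r ^ 6)
        + 2 * (Real.exp L * (2 * Real.exp (-(r ^ 2) ^ 2 / (2 * r ^ 6))))
        + 90 * √L * (2 * r ^ 2)
      ≤ 11000 * r * L * max 1 |Real.log r| := by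
  have hr_le : r ≤ r * L := le_mul_of_one_le_right hr.le hL
  have hX : r * L ≤ r * L * max 1 |Real.log r| :=
    le_mul_of_one_le_right (by positivity) (le_max_left _ _)
  have hlog := log_one_add_pow_six_div_le hr (by linarith)
  have hexp := exp_mul_exp_neg_sq_div_le (L := L) hr (by linarith) (by linarith)
  have hsqrt : √L ≤ L := Real.sqrt_le_self_iff.2 (.inr hL)
  calc _ ≤ 1440 * L * r * (7 * max 1 |Real.log r|) + 2 * (2 * r) + 90 * L * (2 * r ^ 2) := by
        rw [Real.sq_sqrt (by linarith), mul_left_comm (Real.exp L)]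
        gcongr
    _ ≤ 10080 * (r * L * max 1 |Real.log r|) + 4 * (r * L) + 180 * (r * L) := by
        nlinarith
    _ ≤ 11000 * r * L * max 1 |Real.log r| := by nlinarith

end Optimization

section Bound

variable {ι : Type*} [Fintype ι] [DecidableEq ι] {S S' : Matrix ι ι ℝ} {v : NNReal} {D : ℝ}

lemma abs_measureReal_gaussianLaw_enlargedBox_sub_le (hv : v ≠ 0)
    (hS : (S - (v : ℝ) • 1).PosSemidef) (hdiag : ∀ j, S j j = 1) (hS' : S'.PosSemidef)
    (hcard : 3 ≤ Fintype.card ι) (hD : 0 ≤ D) (hSS' : ∀ j k, |S' j k - S j k| ≤ D)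
    (a b : ι → ℝ) (r : ℝ) :
    |(gaussianLaw S').real (enlargedBox a b r) - (gaussianLaw S).real (enlargedBox a b r)|
      ≤ 11000 * (D / v) * Real.log (Fintype.card ι) * max 1 |Real.log (D / v)| := by
  have hv' : (0 : ℝ) < v := NNReal.coe_pos.2 (pos_iff_ne_zero.2 hv)
  have hcard_pos : (0 : ℝ) < Fintype.card ι := by positivity
  have hlog : 1 ≤ Real.log (Fintype.card ι) := by
    rw [Real.le_log_iff_exp_le hcard_pos]
    exact Real.exp_one_lt_three.le.trans (by exact_mod_cast hcard)
  have hcard_eq : (Fintype.card ι : ℝ) = Real.exp (Real.log (Fintype.card ι)) :=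
    (Real.exp_log hcard_pos).symm
  rcases hD.eq_or_lt with rfl | hD
  · have heq : S' = S := Matrix.ext fun j k =>
      sub_eq_zero.1 (abs_nonpos_iff.1 (hSS' j k))
    simp [heq]
  set L := Real.log (Fintype.card ι)
  set q := D / v with hq
  have hq_pos : 0 < q := div_pos hD hv'
  rcases le_total (q * L) (1 / 16) with hsmall | hlarge
  · have hbound := abs_measureReal_gaussianLaw_enlargedBox_sub_le_of_smoothing hv hS hdiag hS'
      (Real.one_le_sqrt.2 hlog) (by rw [Real.sq_sqrt (by linarith), ← hcard_eq]) hD.le hSS'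
      (pow_pos hq_pos 6) (pow_pos hq_pos 2) a b r
    rw [hcard_eq, mul_div_assoc, ← hq] at hbound
    exact hbound.trans (smoothing_bound_le hq_pos hlog hsmall)
  · have hX : q * L ≤ q * L * max 1 |Real.log q| :=
      le_mul_of_one_le_right (by positivity) (le_max_left _ _)
    calc _ ≤ 1 := abs_sub_le_of_nonneg_of_le measureReal_nonneg measureReal_le_one
          measureReal_nonneg measureReal_le_one
      _ ≤ 11000 * q * L * max 1 |Real.log q| := by linarith

end Bound

section RandomVector

open scoped Matrix

variable {Ω : Type*} {mΩ : MeasurableSpace Ω} {μ : Measure Ω}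

lemma memLp_of_hasLaw_gaussianReal {X : Ω → ℝ} {m : ℝ} {v : NNReal}
    (hX : HasLaw X (gaussianReal m v) μ) : MemLp X 2 μ := by
  have h : MemLp id 2 (μ.map X) := hX.map_eq ▸ memLp_id_gaussianReal 2
  exact (memLp_map_measure_iff (by fun_prop) hX.aemeasurable).1 h

lemma integral_cexp_mul_I_of_hasLaw_gaussianReal {X : Ω → ℝ} {v : NNReal}
    (hX : HasLaw X (gaussianReal 0 v) μ) :
    ∫ ω, Complex.exp ((X ω : ℝ) * Complex.I) ∂μ = Complex.exp (-(∫ ω, X ω ^ 2 ∂μ : ℝ) / 2) := by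
  have hsq : ∫ ω, X ω ^ 2 ∂μ = v := by
    have h := hX.integral_comp (f := fun x => x ^ 2) (by fun_prop)
    have hvar := variance_fun_id_gaussianReal (μ := 0) (v := v)
    rw [variance_of_integral_eq_zero (by fun_prop) (by simp)] at hvar
    exact h.trans hvar
  have hexp := hX.integral_comp (f := fun x : ℝ => Complex.exp (x * Complex.I)) (by fun_prop)
  have hchar := charFun_gaussianReal (μ := 0) (v := v) 1
  rw [charFun_apply_real] at hchar
  simp only [Complex.ofReal_one, one_mul] at hchar
  rw [hsq, neg_div]
  simpa using hexp.trans hchar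

variable {ι : Type*} [Fintype ι] {Z : Ω → ι → ℝ}

lemma integral_sq_dotProduct (hZ : ∀ j, MemLp (fun ω => Z ω j) 2 μ) (ξ : ι → ℝ) :
    ∫ ω, (ξ ⬝ᵥ Z ω) ^ 2 ∂μ = ξ ⬝ᵥ (Matrix.of fun j k => ∫ ω, Z ω j * Z ω k ∂μ) *ᵥ ξ := by
  have hint : ∀ j k, Integrable (fun ω => ξ j * ξ k * (Z ω j * Z ω k)) μ := fun j k =>
    ((hZ j).integrable_mul (hZ k)).const_mul _
  calc ∫ ω, (ξ ⬝ᵥ Z ω) ^ 2 ∂μ = ∫ ω, ∑ j, ∑ k, ξ j * ξ k * (Z ω j * Z ω k) ∂μ := by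
        simp_rw [sq, dotProduct, Finset.sum_mul_sum, mul_mul_mul_comm]
    _ = ∑ j, ∑ k, ξ j * ξ k * ∫ ω, Z ω j * Z ω k ∂μ := by
        rw [integral_finsetSum _ fun j _ => integrable_finsetSum _ fun k _ => hint j k]
        simp_rw [integral_finsetSum _ fun k _ => hint _ k, integral_const_mul]
    _ = ξ ⬝ᵥ (Matrix.of fun j k => ∫ ω, Z ω j * Z ω k ∂μ) *ᵥ ξ := by
        simp_rw [dotProduct, Matrix.mulVec, dotProduct, Matrix.of_apply, Finset.mul_sum, mul_assoc,
          mul_comm (ξ _) (integral _ _)]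

lemma posSemidef_integral_mul {ι : Type*} [Finite ι] {Z : Ω → ι → ℝ}
    (hZ : ∀ j, MemLp (fun ω => Z ω j) 2 μ) :
    (Matrix.of fun j k => ∫ ω, Z ω j * Z ω k ∂μ).PosSemidef := by
  have := Fintype.ofFinite ι
  refine .of_dotProduct_mulVec_nonneg (Matrix.IsHermitian.ext fun j k => ?_) fun ξ => ?_
  · simp [mul_comm]
  · rw [star_trivial, ← integral_sq_dotProduct hZ]
    exact integral_nonneg fun ω => sq_nonneg _

lemma map_eq_gaussianLaw [DecidableEq ι] [IsProbabilityMeasure μ] (hZ : Measurable Z)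
    (hgauss : ∀ l : (ι → ℝ) →ₗ[ℝ] ℝ, ∃ v : NNReal, μ.map (fun ω => l (Z ω)) = gaussianReal 0 v)
    {S : ι → ι → ℝ} (hcov : ∀ j k, ∫ ω, Z ω j * Z ω k ∂μ = S j k) :
    (Matrix.of S).PosSemidef ∧ μ.map Z = gaussianLaw (Matrix.of S) := by
  obtain rfl : S = fun j k => ∫ ω, Z ω j * Z ω k ∂μ := by
    ext j k
    exact (hcov j k).symm
  have hmem : ∀ j, MemLp (fun ω => Z ω j) 2 μ := fun j => by
    obtain ⟨v, hv⟩ := hgauss (LinearMap.proj j)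
    exact memLp_of_hasLaw_gaussianReal ⟨by fun_prop, hv⟩
  have hS := posSemidef_integral_mul hmem
  have := Measure.isProbabilityMeasure_map (μ := μ) hZ.aemeasurable
  refine ⟨hS, eq_gaussianLaw hS fun ξ => ?_⟩
  obtain ⟨v, hv⟩ := hgauss (dotProductBilin ℝ ℝ ξ)
  rw [integral_map hZ.aemeasurable (continuous_cexp_dotProduct_mul_I ξ).aestronglyMeasurable,
    ← integral_sq_dotProduct hmem]
  exact integral_cexp_mul_I_of_hasLaw_gaussianReal ⟨by fun_prop, hv⟩

end RandomVector

section SmallestEigenvalue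

open scoped Matrix

variable {ι : Type*} [Fintype ι] [DecidableEq ι]

lemma posSemidef_sub_smul_one_of_le_dotProduct_mulVec {S : Matrix ι ι ℝ} (hS : S.IsHermitian)
    {c : ℝ} (h : ∀ x : ι → ℝ, x ⬝ᵥ x = 1 → c ≤ x ⬝ᵥ S *ᵥ x) : (S - c • 1).PosSemidef := by
  refine .of_dotProduct_mulVec_nonneg (hS.sub (Matrix.isHermitian_one.smul (.all c))) fun x => ?_
  rw [star_trivial, Matrix.sub_mulVec, Matrix.smul_mulVec, Matrix.one_mulVec, dotProduct_sub,
    dotProduct_smul, smul_eq_mul, sub_nonneg]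
  rcases eq_or_ne x 0 with rfl | hx
  · simp
  have hpos : 0 < x ⬝ᵥ x := by
    simpa using Matrix.dotProduct_star_self_pos_iff.2 hx
  have hn : √(x ⬝ᵥ x) ^ 2 = x ⬝ᵥ x := Real.sq_sqrt hpos.le
  have hunit := h ((√(x ⬝ᵥ x))⁻¹ • x) (by
    rw [smul_dotProduct, dotProduct_smul, smul_smul, smul_eq_mul, ← sq, inv_pow, hn,
      inv_mul_cancel₀ hpos.ne'])
  rwa [Matrix.mulVec_smul, smul_dotProduct, dotProduct_smul, smul_smul, smul_eq_mul, ← sq, inv_pow,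
    hn, inv_mul_eq_div, le_div_iff₀ hpos] at hunit

end SmallestEigenvalue

section Reformulation

lemma toReal_measure_forall_lt_and_le {Ω ι : Type*} {mΩ : MeasurableSpace Ω} {μ : Measure Ω}
    [Countable ι] {Z : Ω → ι → ℝ} (hZ : Measurable Z) (a b : ι → ℝ) :
    (μ {ω | ∀ j, a j < Z ω j ∧ Z ω j ≤ b j}).toReal = (μ.map Z).real (enlargedBox a b 0) := by
  rw [map_measureReal_apply hZ (measurableSet_enlargedBox a b 0)]
  simp only [Measure.real, enlargedBox, sub_zero, add_zero, Set.preimage, Set.mem_univ_pi,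
    Set.mem_Ioc]

lemma le_ciSup_ciSup {ι κ : Type*} [Finite ι] [Finite κ] (f : ι → κ → ℝ) (j : ι) (k : κ) :
    f j k ≤ ⨆ j, ⨆ k, f j k :=
  (le_ciSup (Set.finite_range (f j)).bddAbove k).trans
    (le_ciSup (f := fun j => ⨆ k, f j k) (Set.finite_range _).bddAbove j)

end Reformulation

end GaussianRectangle

/-- Gaussian comparison over rectangles.  There is a universal constant C
such that for centered Gaussian vectors Z ∼ N(0,Σ), Z' ∼ N(0,Σ') in ℝ^d (d ≥ 3), Σ with
unit diagonal and smallest eigenvalue σ_*² > 0, and D = ‖Σ − Σ'‖_∞, for every rectangle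
A = ∏ (a_j, b_j]: |P(Z ∈ A) − P(Z' ∈ A)| ≤ C (D/σ_*²)(log d)(1 ∨ |log(D/σ_*²)|). -/
theorem stmt11 :
    ∃ C : ℝ, 0 < C ∧
      ∀ (d : ℕ), 3 ≤ d →
      ∀ (Ω : Type) (_ : MeasurableSpace Ω) (μ : Measure Ω), IsProbabilityMeasure μ →
      ∀ (Z Z' : Ω → Fin d → ℝ), Measurable Z → Measurable Z' →
      (∀ l : (Fin d → ℝ) →ₗ[ℝ] ℝ, ∃ v : NNReal,
        μ.map (fun ω => l (Z ω)) = gaussianReal 0 v) →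
      (∀ l : (Fin d → ℝ) →ₗ[ℝ] ℝ, ∃ v : NNReal,
        μ.map (fun ω => l (Z' ω)) = gaussianReal 0 v) →
      ∀ (S S' : Fin d → Fin d → ℝ),
      (∀ j k, ∫ ω, Z ω j * Z ω k ∂μ = S j k) →
      (∀ j k, ∫ ω, Z' ω j * Z' ω k ∂μ = S' j k) →
      (∀ j, S j j = 1) →
      ∀ σs : ℝ, 0 < σs →
      IsGLB {r : ℝ | ∃ x : Fin d → ℝ, (∑ j, (x j) ^ 2) = 1 ∧
        r = ∑ j, ∑ k, x j * S j k * x k} (σs ^ 2) →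
      ∀ D : ℝ, D = ⨆ j, ⨆ k, |S j k - S' j k| →
      ∀ a b : Fin d → ℝ,
        |(μ {ω | ∀ j, a j < Z ω j ∧ Z ω j ≤ b j}).toReal
          - (μ {ω | ∀ j, a j < Z' ω j ∧ Z' ω j ≤ b j}).toReal|
          ≤ C * (D / σs ^ 2) * Real.log d * max 1 |Real.log (D / σs ^ 2)| := by
  refine ⟨11000, by norm_num, ?_⟩
  intro d hd Ω _ μ _ Z Z' hZ hZ' hgauss hgauss' S S' hS hS' hdiag σ hσ hglb D hD a b
  obtain ⟨hpsd, hlaw⟩ := GaussianRectangle.map_eq_gaussianLaw hZ hgauss hS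
  obtain ⟨hpsd', hlaw'⟩ := GaussianRectangle.map_eq_gaussianLaw hZ' hgauss' hS'
  have hSS' : ∀ j k, |S' j k - S j k| ≤ D := fun j k => by
    rw [abs_sub_comm, hD]
    exact GaussianRectangle.le_ciSup_ciSup (fun j k => |S j k - S' j k|) j k
  have hD_nonneg : 0 ≤ D := (abs_nonneg _).trans (hSS' ⟨0, by omega⟩ ⟨0, by omega⟩)
  have hmin : (Matrix.of S - σ ^ 2 • 1).PosSemidef :=
    GaussianRectangle.posSemidef_sub_smul_one_of_le_dotProduct_mulVec hpsd.isHermitian fun x hx =>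
      hglb.1 ⟨x, by simpa only [sq] using! hx, by
        simp_rw [dotProduct, Matrix.mulVec, dotProduct, Finset.mul_sum, mul_assoc, Matrix.of_apply]⟩
  rw [GaussianRectangle.toReal_measure_forall_lt_and_le hZ,
    GaussianRectangle.toReal_measure_forall_lt_and_le hZ', hlaw, hlaw', abs_sub_comm]
  lift σ to NNReal using hσ.le
  simpa using GaussianRectangle.abs_measureReal_gaussianLaw_enlargedBox_sub_le (v := σ ^ 2)
    (S := .of S) (pow_ne_zero 2 (NNReal.coe_pos.1 hσ).ne') (by exact_mod_cast hmin) hdiag hpsd'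
    (by simpa using hd) hD_nonneg hSS' a b 0
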